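/- arXiv:1410.1579 — 2 statements merged into one kernel-verified Lean document; each statement's English description precedes it below -/
import Mathlib

section
/- There exists a constant C > 0 such that for every n ∈ ℕ and every plane straight-line graph G on a set of n points in ℝ², the number of x-monotone paths in G is at most C·αⁿ, where α is the unique real root of x³ − x² − x − 1 = 0. -/
open scoped BigOperators

noncomputable section

/-- Points of the plane. -/
abbrev Pt : Type := ℝ × ℝ

/-- Dot product on the plane. -/
def dotp (a b : Pt) : ℝ := a.1 * b.1 + a.2 * b.2

/-- The geometric conditions making `(V, E)` a plane straight-line graph:
every edge joins two distinct points of `V`, no point of `V` lies in the open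
segment of an edge, and the open segments of two distinct edges are disjoint. -/
def ValidEdges (V : Finset Pt) (E : Finset (Sym2 Pt)) : Prop :=
  (∀ a b : Pt, s(a, b) ∈ E → a ∈ V ∧ b ∈ V ∧ a ≠ b) ∧
  (∀ a b : Pt, s(a, b) ∈ E → ∀ v ∈ V, v ∉ openSegment ℝ a b) ∧
  (∀ a b c d : Pt, s(a, b) ∈ E → s(c, d) ∈ E → s(a, b) ≠ s(c, d) →
    openSegment ℝ a b ∩ openSegment ℝ c d = ∅)

/-- A plane straight-line graph. -/
structure PSLG where
  V : Finset Pt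
  E : Finset (Sym2 Pt)
  valid : ValidEdges V E

/-- A path in `G`: a sequence of at least two vertices, consecutive ones joined by edges. -/
def IsPathIn (G : PSLG) (L : List Pt) : Prop :=
  2 ≤ L.length ∧ L.Chain' (fun a b => s(a, b) ∈ G.E)

/-- An x-monotone path: x-coordinates strictly increasing along the path. -/
def IsXMonotonePath (G : PSLG) (L : List Pt) : Prop :=
  IsPathIn G L ∧ L.Chain' (fun a b => a.1 < b.1)

/-- Monotonicity of a vertex sequence in direction `u`. -/
def MonotoneInDir (u : Pt) (L : List Pt) : Prop :=
  L.Chain' (fun a b => 0 < dotp (b - a) u)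

/-- A monotone path: monotone in some direction `u ≠ 0`. -/
def IsMonotonePath (G : PSLG) (L : List Pt) : Prop :=
  IsPathIn G L ∧ ∃ u : Pt, u ≠ 0 ∧ MonotoneInDir u L

/-- The number of x-monotone paths in `G`. -/
def xMonCount (G : PSLG) : ℕ := Set.ncard {L : List Pt | IsXMonotonePath G L}

/-- The number of monotone paths in `G`, a path and its reversal counted once. -/
def monPathCount (G : PSLG) : ℕ :=
  Set.ncard {P : Set (List Pt) | ∃ L, IsMonotonePath G L ∧ P = {L, L.reverse}}

/-- Consecutive pairs along a cycle (including the wrap-around pair). -/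
def cyclePairs (L : List Pt) : List (Pt × Pt) := L.zip (L.rotate 1)

/-- A cycle in `G`: at least 3 pairwise distinct vertices, cyclically joined by edges. -/
def IsCycleIn (G : PSLG) (L : List Pt) : Prop :=
  3 ≤ L.length ∧ L.Nodup ∧ ∀ p ∈ cyclePairs L, s(p.1, p.2) ∈ G.E

/-- The union of the closed edge segments of a cycle. -/
def cycleBody (L : List Pt) : Set Pt := ⋃ p ∈ cyclePairs L, segment ℝ p.1 p.2

/-- A star-shaped polygon in `G`: a cycle for which some point `o` sees the boundary
in exactly one point along every ray emanating from `o`. -/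
def IsStarShapedPolygon (G : PSLG) (L : List Pt) : Prop :=
  IsCycleIn G L ∧ ∃ o : Pt, ∀ d : Pt, d ≠ 0 →
    ∃! p : Pt, p ∈ cycleBody L ∧ ∃ t : ℝ, 0 ≤ t ∧ p = o + t • d

/-- The edge set of a cycle, used to count polygons. -/
def cycleEdgeSet (L : List Pt) : Finset (Sym2 Pt) :=
  ((cyclePairs L).map (fun p => s(p.1, p.2))).toFinset

/-- The number of star-shaped polygons in `G`, counted by edge sets. -/
def starCount (G : PSLG) : ℕ :=
  Set.ncard {E' : Finset (Sym2 Pt) | ∃ L, IsStarShapedPolygon G L ∧ E' = cycleEdgeSet L}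

/-- Cross product (signed area). -/
def crossp (a b : Pt) : ℝ := a.1 * b.2 - a.2 * b.1

/-- A convex polygon in `G`: a cycle whose vertices are in strictly convex position and
appear along the cycle in their convex-hull cyclic order; equivalently, for every directed
edge of the cycle all other vertices lie strictly on the same (left or right) side. -/
def IsConvexPolygon (G : PSLG) (L : List Pt) : Prop :=
  IsCycleIn G L ∧
  ((∀ p ∈ cyclePairs L, ∀ v ∈ L, v ≠ p.1 → v ≠ p.2 → 0 < crossp (p.2 - p.1) (v - p.1)) ∨
   (∀ p ∈ cyclePairs L, ∀ v ∈ L, v ≠ p.1 → v ≠ p.2 → crossp (p.2 - p.1) (v - p.1) < 0))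

/-- The number of convex polygons in `G`, counted by edge sets. -/
def convexCount (G : PSLG) : ℕ :=
  Set.ncard {E' : Finset (Sym2 Pt) | ∃ L, IsConvexPolygon G L ∧ E' = cycleEdgeSet L}

/-- A triangulation: an edge-maximal plane straight-line graph. -/
def PSLG.IsTriangulation (G : PSLG) : Prop :=
  ∀ a ∈ G.V, ∀ b ∈ G.V, a ≠ b → s(a, b) ∉ G.E → ¬ ValidEdges G.V (insert s(a, b) G.E)

/-- An orientation of a PSLG: each edge `{a, b}` receives exactly one of the ordered
pairs `(a, b)`, `(b, a)`. -/
def IsOrientation (G : PSLG) (D : Finset (Pt × Pt)) : Prop :=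
  (∀ p ∈ D, s(p.1, p.2) ∈ G.E) ∧
  ∀ a b : Pt, s(a, b) ∈ G.E →
    (((a, b) ∈ D ∧ (b, a) ∉ D) ∨ ((b, a) ∈ D ∧ (a, b) ∉ D))

/-- A directed simple path in a directed graph on points. -/
def IsDirPath (D : Finset (Pt × Pt)) (L : List Pt) : Prop :=
  2 ≤ L.length ∧ L.Nodup ∧ L.Chain' (fun a b => (a, b) ∈ D)

/-- The number of directed simple paths. -/
def dirPathCount (D : Finset (Pt × Pt)) : ℕ := Set.ncard {L : List Pt | IsDirPath D L}

/-- No three of the points of `S` are collinear. -/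
def NoThreeCollinear (S : Finset Pt) : Prop :=
  ∀ p ∈ S, ∀ q ∈ S, ∀ r ∈ S, p ≠ q → p ≠ r → q ≠ r → ¬ Collinear ℝ ({p, q, r} : Set Pt)

/-- A maximal monotone path: not a proper subpath (up to reversal) of another
monotone path of `G`. -/
def IsMaximalMonotonePath (G : PSLG) (L : List Pt) : Prop :=
  IsMonotonePath G L ∧ ∀ M : List Pt, IsMonotonePath G M →
    (L <:+: M ∨ L.reverse <:+: M) → (L = M ∨ L.reverse = M)

/-!
Insert the vertices from right to left. Suppose that any `k` of the present vertices start at most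
`w k * M` paths between them, and that the new vertex has `d` edges to the right. It starts at most
`1 + w d * M` paths, so together with `k` old vertices at most `1 + (w d + w k) * M`. Weights with
`w d + w k ≤ c d * w (k + 1)`, where `c d = α * (2 / α) ^ (d - 3)`, keep the bound alive when `M` is
multiplied by `c d`, the additive `1` being absorbed by a shift of `M`. Over `n` vertices with
out-degrees `d` the factors `c d` multiply to `α ^ n * (2 / α) ^ (m - 3 * n)`, `m` being the number
of edges, and this is at most `α ^ n` since a plane graph has at most `3 * n` edges.

The bound on the edges needs no Euler formula: an edge is the lowest one leaving its left endpoint,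
or the lowest one reaching its right endpoint, or the first edge above some vertex. For, if `f` is
the edge just below `e` at its left endpoint, then no edge separates `e` from the leftmost vertex in
the wedge between `f` and `e`, which is either the right endpoint of `e` or a vertex below `e`.
-/

section Growth

variable {α : ℝ}

theorem tribonacci_root_bounds (h₁ : 1 < α) (hα : α ^ 3 = α ^ 2 + α + 1) :
    1.839 < α ∧ α < 1.84 := by
  constructor <;> by_contra! h <;> nlinarith [mul_pos (sub_pos.2 h₁) (sub_pos.2 h₁)]

/-- The factor `α * (2 / α) ^ (d - 3)`, written so that no exponent is negative: an upper bound for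
how much a new leftmost vertex with `d` edges to the right multiplies the number of paths. It is
`α` for `d = 3` and `2` for `d = 4`. -/
def growthFactor (α : ℝ) (d : ℕ) : ℝ := α ^ 4 / 8 * (2 / α) ^ d

/-- Weights `w` such that, if the paths are counted against a common potential `M`, then at most
`w k * M` of them start in any given set of `k` vertices.

The first values solve `w (k + 1) = 1 + w k / α`, the equality case of `startWeight_add_le` for
`d = 3`; that `w 3 = α` is the cubic equation for `α`. The other values are rational numbers chosen
to meet the remaining inequalities with room to spare. -/
def startWeight (α : ℝ) : ℕ → ℝ
  | 0 => 0
  | 1 => 1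
  | 2 => α ^ 2 - α
  | 3 => α
  | 4 => 2
  | 5 => 17 / 8
  | _ => 9 / 4

theorem growthFactor_monotone (h₁ : 1 < α) (hα : α ^ 3 = α ^ 2 + α + 1) :
    Monotone (growthFactor α) := by
  have hβ : 1 ≤ 2 / α := (one_le_div (by linarith)).2 (by linarith [tribonacci_root_bounds h₁ hα])
  exact fun d e hde => mul_le_mul_of_nonneg_left (pow_le_pow_right₀ hβ hde) (by positivity)

theorem growthFactor_three (h : α ≠ 0) : growthFactor α 3 = α := by
  simp only [growthFactor]
  field_simp
  norm_num

theorem seven_fifths_le_growthFactor (h₁ : 1 < α) (hα : α ^ 3 = α ^ 2 + α + 1) (d : ℕ) :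
    7 / 5 ≤ growthFactor α d := by
  calc (7 / 5 : ℝ) ≤ 1.839 ^ 4 / 8 := by norm_num
    _ ≤ α ^ 4 / 8 := by
        have hlow := (tribonacci_root_bounds h₁ hα).1.le
        exact div_le_div_of_nonneg_right (pow_le_pow_left₀ (by norm_num) hlow 4) (by norm_num)
    _ = growthFactor α 0 := by rw [growthFactor, pow_zero, mul_one]
    _ ≤ growthFactor α d := growthFactor_monotone h₁ hα d.zero_le

theorem startWeight_le_growthFactor (h₁ : 1 < α) (hα : α ^ 3 = α ^ 2 + α + 1) {d : ℕ}
    (hd : 3 ≤ d) : startWeight α d ≤ growthFactor α d := by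
  have hupp := (tribonacci_root_bounds h₁ hα).2
  have hpos : 0 < α := by linarith
  match d, hd with
  | 3, _ => exact (growthFactor_three hpos.ne').ge
  | 4, _ =>
    have : growthFactor α 4 = 2 := by simp only [growthFactor]; field_simp; norm_num
    exact this.ge
  | 5, _ =>
    have : growthFactor α 5 = 4 / α := by simp only [growthFactor]; field_simp; norm_num
    rw [this, startWeight, le_div_iff₀ hpos]
    linarith
  | d + 6, _ =>
    calc startWeight α (d + 6) = 9 / 4 := rfl
      _ ≤ 8 / α ^ 2 := by rw [le_div_iff₀ (by positivity)]; nlinarith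
      _ = growthFactor α 6 := by simp only [growthFactor]; field_simp; norm_num
      _ ≤ growthFactor α (d + 6) := growthFactor_monotone h₁ hα (Nat.le_add_left 6 d)

theorem startWeight_le_mul_sub_one (h₁ : 1 < α) (hα : α ^ 3 = α ^ 2 + α + 1) (k : ℕ) :
    startWeight α k ≤ α * (startWeight α (k + 1) - 1) := by
  have ⟨hlow, hupp⟩ := tribonacci_root_bounds h₁ hα
  rcases k with _ | _ | _ | _ | _ | _ | k <;> simp only [startWeight, zero_add, Nat.reduceAdd] <;>
    nlinarith

theorem one_le_startWeight_succ (h₁ : 1 < α) (hα : α ^ 3 = α ^ 2 + α + 1) (k : ℕ) :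
    1 ≤ startWeight α (k + 1) := by
  have ⟨hlow, hupp⟩ := tribonacci_root_bounds h₁ hα
  rcases k with _ | _ | _ | _ | _ | k <;> simp only [startWeight, zero_add, Nat.reduceAdd] <;>
    nlinarith

theorem startWeight_add_le (h₁ : 1 < α) (hα : α ^ 3 = α ^ 2 + α + 1) (d k : ℕ) :
    startWeight α d + startWeight α k ≤ growthFactor α d * startWeight α (k + 1) := by
  have ⟨hlow, hupp⟩ := tribonacci_root_bounds h₁ hα
  have hpos : 0 < α := by linarith
  have h₄ : α ^ 4 = 2 * α ^ 2 + 2 * α + 1 := by linear_combination (α + 1) * hα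
  have h₅ : α ^ 5 = 4 * α ^ 2 + 3 * α + 2 := by linear_combination α * h₄ + 2 * hα
  -- For `d < 3` each of the finitely many cases is strict, and the bounds on `α` decide it.
  match d with
  | 0 =>
    have : growthFactor α 0 = α ^ 4 / 8 := by simp only [growthFactor, pow_zero, mul_one]
    rw [this]
    rcases k with _ | _ | _ | _ | _ | _ | k <;> simp only [startWeight, zero_add, Nat.reduceAdd] <;>
      nlinarith
  | 1 =>
    have : growthFactor α 1 = α ^ 3 / 4 := by simp only [growthFactor]; field_simp; norm_num
    rw [this]
    rcases k with _ | _ | _ | _ | _ | _ | k <;> simp only [startWeight, zero_add, Nat.reduceAdd] <;>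
      nlinarith
  | 2 =>
    have : growthFactor α 2 = α ^ 2 / 2 := by simp only [growthFactor]; field_simp; norm_num
    rw [this]
    rcases k with _ | _ | _ | _ | _ | _ | k <;> simp only [startWeight, zero_add, Nat.reduceAdd] <;>
      nlinarith
  | d + 3 =>
    have hk : 0 ≤ startWeight α (k + 1) - 1 := sub_nonneg.2 (one_le_startWeight_succ h₁ hα k)
    have hd : α ≤ growthFactor α (d + 3) :=
      (growthFactor_three hpos.ne').ge.trans (growthFactor_monotone h₁ hα (Nat.le_add_left 3 d))
    calc startWeight α (d + 3) + startWeight α k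
        ≤ growthFactor α (d + 3) + α * (startWeight α (k + 1) - 1) :=
          add_le_add (startWeight_le_growthFactor h₁ hα (Nat.le_add_left 3 d))
            (startWeight_le_mul_sub_one h₁ hα k)
      _ ≤ growthFactor α (d + 3) + growthFactor α (d + 3) * (startWeight α (k + 1) - 1) := by
          gcongr
      _ = growthFactor α (d + 3) * startWeight α (k + 1) := by ring

theorem startWeight_nonneg (h₁ : 1 < α) (hα : α ^ 3 = α ^ 2 + α + 1) :
    ∀ k, 0 ≤ startWeight α k
  | 0 => le_rfl
  | k + 1 => zero_le_one.trans (one_le_startWeight_succ h₁ hα k)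

theorem startWeight_le (h₁ : 1 < α) (hα : α ^ 3 = α ^ 2 + α + 1) (k : ℕ) :
    startWeight α k ≤ 9 / 4 := by
  have ⟨hlow, hupp⟩ := tribonacci_root_bounds h₁ hα
  rcases k with _ | _ | _ | _ | _ | _ | k <;> simp only [startWeight, zero_add, Nat.reduceAdd] <;>
    nlinarith

theorem one_le_prod_growthFactor {ι : Type*} (h₁ : 1 < α) (hα : α ^ 3 = α ^ 2 + α + 1)
    (V : Finset ι) (d : ι → ℕ) : 1 ≤ ∏ v ∈ V, growthFactor α (d v) :=
  Finset.prod_induction _ (1 ≤ ·) (fun _ _ => one_le_mul_of_one_le_of_one_le) le_rfl fun v _ =>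
    le_trans (by norm_num) (seven_fifths_le_growthFactor h₁ hα (d v))

theorem prod_growthFactor_le_pow {ι : Type*} (h₁ : 1 < α) (hα : α ^ 3 = α ^ 2 + α + 1)
    {V : Finset ι} {d : ι → ℕ} (hd : ∑ v ∈ V, d v ≤ 3 * V.card) :
    ∏ v ∈ V, growthFactor α (d v) ≤ α ^ V.card := by
  have hpos : 0 < α := by linarith
  have hβ : 1 ≤ 2 / α := (one_le_div hpos).2 (by linarith [tribonacci_root_bounds h₁ hα])
  calc ∏ v ∈ V, growthFactor α (d v)
      = (α ^ 4 / 8) ^ V.card * (2 / α) ^ ∑ v ∈ V, d v := by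
        simp only [growthFactor, Finset.prod_mul_distrib, Finset.prod_const,
          Finset.prod_pow_eq_pow_sum]
    _ ≤ (α ^ 4 / 8) ^ V.card * (2 / α) ^ (3 * V.card) := by gcongr
    _ = growthFactor α 3 ^ V.card := by rw [growthFactor, mul_pow, pow_mul]
    _ = α ^ V.card := by rw [growthFactor_three hpos.ne']

/-- The constant `5 / 2` satisfies `1 ≤ 5 / 2 * (growthFactor α d - 1)`, which absorbs the leading
`1`. -/
theorem one_add_startWeight_mul_le (h₁ : 1 < α) (hα : α ^ 3 = α ^ 2 + α + 1) {G : ℝ} (hG : 1 ≤ G)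
    (d k : ℕ) :
    1 + startWeight α d * (5 / 2 * (G - 1)) + startWeight α k * (5 / 2 * (G - 1)) ≤
      startWeight α (k + 1) * (5 / 2 * (growthFactor α d * G - 1)) := by
  have hd : 1 ≤ 5 / 2 * (growthFactor α d - 1) := by
    linarith [seven_fifths_le_growthFactor h₁ hα d]
  have hM : 0 ≤ 5 / 2 * (G - 1) := by linarith
  have hk := one_le_startWeight_succ h₁ hα k
  calc 1 + startWeight α d * (5 / 2 * (G - 1)) + startWeight α k * (5 / 2 * (G - 1))
      = 1 * 1 + (startWeight α d + startWeight α k) * (5 / 2 * (G - 1)) := by ring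
    _ ≤ startWeight α (k + 1) * (5 / 2 * (growthFactor α d - 1)) +
          growthFactor α d * startWeight α (k + 1) * (5 / 2 * (G - 1)) := by
        exact add_le_add (mul_le_mul hk hd zero_le_one (by linarith))
          (mul_le_mul_of_nonneg_right (startWeight_add_le h₁ hα d k) hM)
    _ = startWeight α (k + 1) * (5 / 2 * (growthFactor α d * G - 1)) := by ring

end Growth

section MonotoneChains

variable {ι κ : Type*} [LinearOrder κ] {x : ι → κ}

theorem sum_le_startWeight_mul {α : ℝ} (h₁ : 1 < α) (hα : α ^ 3 = α ^ 2 + α + 1)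
    {N : ι → Finset ι} {f : ι → ℝ} (hx : ∀ v, ∀ u ∈ N v, x v < x u) (V : Finset ι)
    (hN : ∀ v ∈ V, N v ⊆ V) (hf : ∀ v ∈ V, f v ≤ 1 + ∑ u ∈ N v, f u) {A : Finset ι} (hA : A ⊆ V) :
    ∑ v ∈ A, f v ≤ startWeight α A.card *
      (5 / 2 * (∏ v ∈ V, growthFactor α (N v).card - 1)) := by
  classical
  induction V using Finset.induction_on_min_value x generalizing A with
  | empty => simp [Finset.subset_empty.1 hA]
  | insert v V hv hmin ih =>
    have hvN : ∀ u ∈ insert v V, v ∉ N u := fun u hu hvu => by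
      rcases Finset.mem_insert.1 hu with rfl | hu
      exacts [(hx u u hvu).false, (hx u v hvu).not_ge (hmin u hu)]
    have hNV : ∀ u ∈ insert v V, N u ⊆ V := fun u hu =>
      (Finset.subset_insert_iff_of_notMem (hvN u hu)).1 (hN u hu)
    replace ih := @ih (fun u hu => hNV u (Finset.mem_insert_of_mem hu))
      fun u hu => hf u (Finset.mem_insert_of_mem hu)
    rw [Finset.prod_insert hv]
    have hG := one_le_prod_growthFactor h₁ hα V fun u => (N u).card
    by_cases hvA : v ∈ A
    · obtain ⟨B, hvB, rfl⟩ : ∃ B, v ∉ B ∧ insert v B = A :=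
        ⟨A.erase v, Finset.notMem_erase v A, Finset.insert_erase hvA⟩
      have hBV : B ⊆ V := (Finset.insert_subset_insert_iff hvB).1 hA
      have hfv := hf v (Finset.mem_insert_self v V)
      have hNv := ih (hNV v (Finset.mem_insert_self v V))
      rw [Finset.sum_insert hvB, Finset.card_insert_of_notMem hvB]
      exact (add_le_add (hfv.trans (by gcongr)) (ih hBV)).trans
        (one_add_startWeight_mul_le h₁ hα hG _ _)
    · have hAV : A ⊆ V := (Finset.subset_insert_iff_of_notMem hvA).1 hA
      refine (ih hAV).trans ?_
      gcongr
      · exact startWeight_nonneg h₁ hα _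
      · have := seven_fifths_le_growthFactor h₁ hα (N v).card
        exact le_mul_of_one_le_left (by linarith) (by linarith)

/-- The lists `L` in `V` for which `v :: L` is an `R`-chain: the ways to continue a path at `v`. -/
def chainTails (R : ι → ι → Prop) (V : Finset ι) (v : ι) : Set (List ι) :=
  {L | (v :: L).IsChain R ∧ ∀ u ∈ L, u ∈ V}

variable {R : ι → ι → Prop}

open Classical in
theorem ncard_chainTails_le (V : Finset ι) (v : ι) :
    ((chainTails R V v).ncard : ℝ) ≤ 1 + ∑ u ∈ V with R v u, ((chainTails R V u).ncard : ℝ) := by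
  have hsub : chainTails R V v = insert []
      (⋃ u ∈ V.filter (R v), List.cons u '' chainTails R V u) := by
    ext L
    rcases L with _ | ⟨u, L⟩ <;> simp [chainTails, and_comm, and_assoc, and_left_comm]
  have : (chainTails R V v).ncard ≤ 1 + ∑ u ∈ V with R v u, (chainTails R V u).ncard := by
    rw [hsub, add_comm]
    refine (Set.ncard_insert_le _ _).trans (Nat.add_le_add_right
      ((Finset.set_ncard_biUnion_le _ _).trans_eq (Finset.sum_congr rfl fun u _ => ?_)) 1)
    exact Set.ncard_image_of_injective _ List.cons_injective
  exact_mod_cast this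

theorem setOf_isChain_eq_biUnion (V : Finset ι) :
    {L : List ι | L ≠ [] ∧ L.IsChain R ∧ ∀ v ∈ L, v ∈ V} =
      ⋃ v ∈ V, List.cons v '' chainTails R V v := by
  ext L
  rcases L with _ | ⟨v, L⟩ <;> simp [chainTails, and_comm, and_left_comm]

theorem finite_setOf_isChain (hR : ∀ a b, R a b → x a < x b) (V : Finset ι) :
    {L : List ι | L.IsChain R ∧ ∀ v ∈ L, v ∈ V}.Finite := by
  classical
  have hpair : ∀ L : List ι, L.IsChain R → L.Pairwise (x · < x ·) := fun L hL =>
    List.pairwise_map.1 ((List.isChain_map x).2 (hL.imp hR)).pairwise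
  refine Set.Finite.of_injOn (f := List.toFinset) (t := V.powerset) ?_ ?_ (Finset.finite_toSet _)
  · exact fun L hL => by simpa [Set.subset_def] using hL.2
  · intro L hL M hM hLM
    have hL' := hpair L hL.1
    have hM' := hpair M hM.1
    exact (List.perm_of_nodup_nodup_toFinset_eq (hL'.imp fun h => ne_of_apply_ne x h.ne)
      (hM'.imp fun h => ne_of_apply_ne x h.ne) hLM).eq_of_pairwise
      (fun a b _ _ hab hba => (lt_asymm hab hba).elim) hL' hM'

open Classical in
theorem ncard_setOf_isChain_le {α : ℝ} (h₁ : 1 < α) (hα : α ^ 3 = α ^ 2 + α + 1)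
    (hR : ∀ a b, R a b → x a < x b) (V : Finset ι) :
    ({L : List ι | L ≠ [] ∧ L.IsChain R ∧ ∀ v ∈ L, v ∈ V}.ncard : ℝ) ≤
      45 / 8 * ∏ v ∈ V, growthFactor α (V.filter (R v)).card := by
  calc ({L : List ι | L ≠ [] ∧ L.IsChain R ∧ ∀ v ∈ L, v ∈ V}.ncard : ℝ)
      ≤ ∑ v ∈ V, ((chainTails R V v).ncard : ℝ) := by
        rw [setOf_isChain_eq_biUnion, ← Nat.cast_sum, Nat.cast_le]
        exact (Finset.set_ncard_biUnion_le _ _).trans_eq (Finset.sum_congr rfl fun v _ =>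
          Set.ncard_image_of_injective _ List.cons_injective)
    _ ≤ startWeight α V.card *
          (5 / 2 * (∏ v ∈ V, growthFactor α (V.filter (R v)).card - 1)) :=
        sum_le_startWeight_mul h₁ hα (fun v u hu => hR v u (Finset.mem_filter.1 hu).2) V
          (fun v _ => V.filter_subset _) (fun v _ => ncard_chainTails_le V v) subset_rfl
    _ ≤ 9 / 4 * (5 / 2 * ∏ v ∈ V, growthFactor α (V.filter (R v)).card) := by
        have hG := one_le_prod_growthFactor h₁ hα V fun v => (V.filter (R v)).card
        exact mul_le_mul (startWeight_le h₁ hα _) (by linarith) (by linarith) (by norm_num)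
    _ = 45 / 8 * ∏ v ∈ V, growthFactor α (V.filter (R v)).card := by ring

open Classical in
theorem ncard_setOf_isChain_le_of_card_le {α : ℝ} (h₁ : 1 < α) (hα : α ^ 3 = α ^ 2 + α + 1)
    (hR : ∀ a b, R a b → x a < x b) {V : Finset ι}
    (hV : ((V ×ˢ V).filter fun p => R p.1 p.2).card ≤ 3 * V.card) :
    ({L : List ι | L ≠ [] ∧ L.IsChain R ∧ ∀ v ∈ L, v ∈ V}.ncard : ℝ) ≤
      45 / 8 * α ^ V.card := by
  refine (ncard_setOf_isChain_le h₁ hα hR V).trans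
    (mul_le_mul_of_nonneg_left ?_ (by norm_num))
  have hdeg : ∑ v ∈ V, (V.filter (R v)).card = ((V ×ˢ V).filter fun p => R p.1 p.2).card := by
    simp only [Finset.card_filter, Finset.sum_product]
  exact prod_growthFactor_le_pow h₁ hα (hdeg.trans_le hV)

end MonotoneChains

section PlaneSegments

/-- The slope of the segment from `e.1` to `e.2`; meaningful only when `e.1.1 ≠ e.2.1`. -/
def segSlope (e : Pt × Pt) : ℝ := (e.2.2 - e.1.2) / (e.2.1 - e.1.1)

/-- The height above `x` of the line through `e.1` and `e.2`. -/
def heightAt (e : Pt × Pt) (x : ℝ) : ℝ := e.1.2 + segSlope e * (x - e.1.1)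

/-- The points on or between the rays leaving `e.1` to the right along `f` (below) and `e` (above),
the apex excluded; used when `f` and `e` start at the same point. -/
def wedge (f e : Pt × Pt) : Set Pt :=
  {v | e.1.1 < v.1 ∧ heightAt f v.1 ≤ v.2 ∧ v.2 ≤ heightAt e v.1}

@[simp]
theorem heightAt_fst (e : Pt × Pt) : heightAt e e.1.1 = e.1.2 := by simp [heightAt]

theorem heightAt_eq_add_segSlope_mul {e : Pt × Pt} (h : e.1.1 < e.2.1) (x : ℝ) :
    heightAt e x = e.2.2 + segSlope e * (x - e.2.1) := by
  have : e.2.1 - e.1.1 ≠ 0 := (sub_pos.2 h).ne'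
  rw [heightAt, segSlope]
  field_simp
  ring

theorem heightAt_snd {e : Pt × Pt} (h : e.1.1 < e.2.1) : heightAt e e.2.1 = e.2.2 := by
  simp [heightAt_eq_add_segSlope_mul h]

theorem continuous_heightAt (e : Pt × Pt) : Continuous (heightAt e) := by
  unfold heightAt
  fun_prop

theorem heightAt_lt_heightAt_iff {e f : Pt × Pt} (h : f.1 = e.1) {x : ℝ} (hx : e.1.1 < x) :
    heightAt f x < heightAt e x ↔ segSlope f < segSlope e := by
  rw [heightAt, heightAt, h, add_lt_add_iff_left, mul_lt_mul_iff_left₀ (sub_pos.2 hx)]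

theorem mk_heightAt_mem_openSegment {e : Pt × Pt} {x : ℝ} (h₁ : e.1.1 < x) (h₂ : x < e.2.1) :
    (x, heightAt e x) ∈ openSegment ℝ e.1 e.2 := by
  have h : 0 < e.2.1 - e.1.1 := by linarith
  refine ⟨(e.2.1 - x) / (e.2.1 - e.1.1), (x - e.1.1) / (e.2.1 - e.1.1),
    div_pos (by linarith) h, div_pos (by linarith) h, ?_, ?_⟩
  · field_simp
    ring
  · ext
    · simp only [Prod.fst_add, Prod.smul_fst, smul_eq_mul]
      field_simp
      ring
    · simp only [Prod.snd_add, Prod.smul_snd, smul_eq_mul, heightAt, segSlope]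
      field_simp
      ring

/-- A plane straight-line drawing of a directed graph on `S` all of whose edges point to the
right. -/
structure IsNoncrossing (S : Finset Pt) (D : Finset (Pt × Pt)) : Prop where
  fst_mem : ∀ e ∈ D, e.1 ∈ S
  snd_mem : ∀ e ∈ D, e.2 ∈ S
  lt : ∀ e ∈ D, e.1.1 < e.2.1
  notMem_openSegment : ∀ e ∈ D, ∀ v ∈ S, v ∉ openSegment ℝ e.1 e.2
  pairwiseDisjoint : (D : Set (Pt × Pt)).PairwiseDisjoint fun e => openSegment ℝ e.1 e.2

/-- `e` is the lowest edge of `D` leaving its left endpoint. -/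
def IsLowestOutgoing (D : Finset (Pt × Pt)) (e : Pt × Pt) : Prop :=
  ∀ g ∈ D, g.1 = e.1 → segSlope e ≤ segSlope g

/-- `e` is the lowest edge of `D` reaching its right endpoint, so it has the largest slope. -/
def IsLowestIncoming (D : Finset (Pt × Pt)) (e : Pt × Pt) : Prop :=
  ∀ g ∈ D, g.2 = e.2 → segSlope g ≤ segSlope e

/-- `e` is the first edge of `D` met by a vertical ray going up from `w`. -/
structure IsDirectlyAbove (D : Finset (Pt × Pt)) (e : Pt × Pt) (w : Pt) : Prop where
  left_lt : e.1.1 < w.1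
  lt_right : w.1 < e.2.1
  lt_height : w.2 < heightAt e w.1
  height_le : ∀ g ∈ D, g.1.1 < w.1 → w.1 < g.2.1 → w.2 < heightAt g w.1 →
    heightAt e w.1 ≤ heightAt g w.1

/-- Among the edges of `D` leaving `e.1`, `f` is the one directly below `e`. -/
structure IsNextBelow (D : Finset (Pt × Pt)) (f e : Pt × Pt) : Prop where
  mem : f ∈ D
  fst_eq : f.1 = e.1
  slope_lt : segSlope f < segSlope e
  slope_le : ∀ g ∈ D, g.1 = e.1 → segSlope g < segSlope e → segSlope g ≤ segSlope f

theorem exists_isNextBelow {D : Finset (Pt × Pt)} {e : Pt × Pt} (he : ¬ IsLowestOutgoing D e) :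
    ∃ f, IsNextBelow D f e := by
  classical
  obtain ⟨g, hg, hge, hlt⟩ : ∃ g ∈ D, g.1 = e.1 ∧ segSlope g < segSlope e := by
    simpa [IsLowestOutgoing] using he
  obtain ⟨f, hf, hmax⟩ := (D.filter fun g => g.1 = e.1 ∧ segSlope g < segSlope e).exists_max_image
    segSlope ⟨g, Finset.mem_filter.2 ⟨hg, hge, hlt⟩⟩
  obtain ⟨hfD, hfe, hfs⟩ := Finset.mem_filter.1 hf
  exact ⟨f, hfD, hfe, hfs, fun k hk hke hks => hmax k (Finset.mem_filter.2 ⟨hk, hke, hks⟩)⟩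

namespace IsNoncrossing

variable {S : Finset Pt} {D : Finset (Pt × Pt)}

theorem heightAt_ne (h : IsNoncrossing S D) {e : Pt × Pt} (he : e ∈ D) {v : Pt} (hv : v ∈ S)
    (h₁ : e.1.1 < v.1) (h₂ : v.1 < e.2.1) : heightAt e v.1 ≠ v.2 := fun heq =>
  h.notMem_openSegment e he v hv (by simpa only [heq] using mk_heightAt_mem_openSegment h₁ h₂)

theorem eq_of_heightAt_eq (h : IsNoncrossing S D) {e f : Pt × Pt} (he : e ∈ D) (hf : f ∈ D)
    {x : ℝ} (he₁ : e.1.1 < x) (he₂ : x < e.2.1) (hf₁ : f.1.1 < x) (hf₂ : x < f.2.1)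
    (heq : heightAt e x = heightAt f x) : e = f :=
  h.pairwiseDisjoint.elim he hf (Set.not_disjoint_iff.2
    ⟨_, mk_heightAt_mem_openSegment he₁ he₂, heq ▸ mk_heightAt_mem_openSegment hf₁ hf₂⟩)

theorem heightAt_lt_heightAt (h : IsNoncrossing S D) {e f : Pt × Pt} (he : e ∈ D) (hf : f ∈ D)
    {a b p q : ℝ} (hea : e.1.1 ≤ a) (hfa : f.1.1 ≤ a) (heb : b ≤ e.2.1) (hfb : b ≤ f.2.1)
    (hp : p ∈ Set.Ioo a b) (hq : q ∈ Set.Icc a b) (hlt : heightAt e q < heightAt f q) :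
    heightAt e p < heightAt f p := by
  by_contra! hge
  obtain ⟨z, hz, hz0⟩ := intermediate_value_uIcc
    (((continuous_heightAt e).sub (continuous_heightAt f)).continuousOn (s := Set.uIcc q p))
    (Set.mem_uIcc_of_le (sub_neg.2 hlt).le (sub_nonneg.2 hge))
  have hz0 : heightAt e z = heightAt f z := sub_eq_zero.1 hz0
  have hzq : z ≠ q := by rintro rfl; exact hlt.ne hz0
  have hzab : a < z ∧ z < b := by
    rcases Set.mem_uIcc.1 hz with ⟨hqz, hzp⟩ | ⟨hpz, hzq'⟩
    · exact ⟨hq.1.trans_lt (hqz.lt_of_ne' hzq), hzp.trans_lt hp.2⟩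
    · exact ⟨hp.1.trans_le hpz, (hzq'.lt_of_ne hzq).trans_le hq.2⟩
  have := h.eq_of_heightAt_eq he hf (hea.trans_lt hzab.1) (hzab.2.trans_le heb)
    (hfa.trans_lt hzab.1) (hzab.2.trans_le hfb) hz0
  exact hlt.ne (this ▸ rfl)

theorem exists_leftmost_mem_wedge (h : IsNoncrossing S D) {e f : Pt × Pt} (he : e ∈ D)
    (hf : IsNextBelow D f e) : ∃ w ∈ S, w ∈ wedge f e ∧ w.1 ≤ e.2.1 ∧ w.1 ≤ f.2.1 ∧
      ∀ v ∈ S, v ∈ wedge f e → w.1 ≤ v.1 := by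
  classical
  have hfe₁ : f.1.1 = e.1.1 := congrArg Prod.fst hf.fst_eq
  have hle : e.1.1 < e.2.1 := h.lt e he
  have hlf : f.1.1 < f.2.1 := h.lt f hf.mem
  have hfe {x : ℝ} (hx : e.1.1 < x) : heightAt f x ≤ heightAt e x :=
    ((heightAt_lt_heightAt_iff hf.fst_eq hx).2 hf.slope_lt).le
  obtain ⟨u, huS, hu, hue, huf⟩ : ∃ u ∈ S, u ∈ wedge f e ∧ u.1 ≤ e.2.1 ∧ u.1 ≤ f.2.1 := by
    rcases le_total e.2.1 f.2.1 with hef | hef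
    · have := heightAt_snd hle
      exact ⟨e.2, h.snd_mem e he, ⟨hle, this ▸ hfe hle, this.ge⟩, le_rfl, hef⟩
    · have := heightAt_snd hlf
      rw [hfe₁] at hlf
      exact ⟨f.2, h.snd_mem f hf.mem, ⟨hlf, this.le, this ▸ hfe hlf⟩, hef, le_rfl⟩
  obtain ⟨w, hw, hmin⟩ := (S.filter (· ∈ wedge f e)).exists_min_image Prod.fst
    ⟨u, Finset.mem_filter.2 ⟨huS, hu⟩⟩
  have hwu := hmin u (Finset.mem_filter.2 ⟨huS, hu⟩)
  exact ⟨w, (Finset.mem_filter.1 hw).1, (Finset.mem_filter.1 hw).2, hwu.trans hue, hwu.trans huf,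
    fun v hv hvw => hmin v (Finset.mem_filter.2 ⟨hv, hvw⟩)⟩

/-- Followed to the left, an edge `k` between `f` and `e` would start inside the wedge, pass through
its apex, or start at the apex between `f` and `e`. -/
theorem not_heightAt_lt_of_isNextBelow (h : IsNoncrossing S D) {e f k : Pt × Pt} (he : e ∈ D)
    (hk : k ∈ D) (hf : IsNextBelow D f e) {ξ : ℝ} (hξe : ξ ≤ e.2.1) (hξf : ξ ≤ f.2.1)
    (hξk : ξ ≤ k.2.1) (hempty : ∀ v ∈ S, v ∈ wedge f e → ξ ≤ v.1) {p : ℝ}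
    (hp : p ∈ Set.Ioo (max e.1.1 k.1.1) ξ) (hfk : heightAt f p < heightAt k p) :
    ¬ heightAt k p < heightAt e p := by
  intro hke
  have hfe₁ : f.1.1 = e.1.1 := congrArg Prod.fst hf.fst_eq
  have hl := le_max_left e.1.1 k.1.1
  have hr := le_max_right e.1.1 k.1.1
  have hlξ : max e.1.1 k.1.1 < ξ := hp.1.trans hp.2
  have hmem : max e.1.1 k.1.1 ∈ Set.Icc (max e.1.1 k.1.1) ξ := ⟨le_rfl, hlξ.le⟩
  have hlower : heightAt f (max e.1.1 k.1.1) ≤ heightAt k (max e.1.1 k.1.1) := not_lt.1 fun hlt =>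
    lt_asymm hfk
      (h.heightAt_lt_heightAt hk hf.mem hr (hfe₁.trans_le hl) hξk hξf hp hmem hlt)
  have hupper : heightAt k (max e.1.1 k.1.1) ≤ heightAt e (max e.1.1 k.1.1) := not_lt.1 fun hlt =>
    lt_asymm hke (h.heightAt_lt_heightAt he hk hl hr hξe hξk hp hmem hlt)
  rcases lt_or_ge e.1.1 k.1.1 with hek | hek
  · rw [max_eq_right hek.le, heightAt_fst] at hlower hupper
    exact (hr.trans_lt hlξ).not_ge (hempty k.1 (h.fst_mem k hk) ⟨hek, hlower, hupper⟩)
  · rw [max_eq_left hek] at hlower hupper hlξ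
    have hapex : heightAt k e.1.1 = e.1.2 :=
      le_antisymm (hupper.trans_eq (heightAt_fst e))
        (hlower.trans_eq' (by rw [← hfe₁, heightAt_fst, hf.fst_eq]))
    rcases hek.lt_or_eq with hek | hek
    · exact h.heightAt_ne hk (h.fst_mem e he) hek (hlξ.trans_le hξk) hapex
    · have hke₁ : k.1 = e.1 := Prod.ext hek (by rw [← hapex, ← hek, heightAt_fst])
      have hep : e.1.1 < p := hl.trans_lt hp.1
      have hkf := hf.slope_le k hk hke₁ ((heightAt_lt_heightAt_iff hke₁ hep).1 hke)
      exact hkf.not_gt ((heightAt_lt_heightAt_iff (hf.fst_eq.trans hke₁.symm) (hek ▸ hep)).1 hfk)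

theorem isLowestIncoming_of_isNextBelow (h : IsNoncrossing S D) {e f : Pt × Pt} (he : e ∈ D)
    (hf : IsNextBelow D f e) (hef : e.2.1 ≤ f.2.1)
    (hempty : ∀ v ∈ S, v ∈ wedge f e → e.2.1 ≤ v.1) : IsLowestIncoming D e := by
  intro k hk hke
  by_contra! hslope
  have hfe₁ : f.1.1 = e.1.1 := congrArg Prod.fst hf.fst_eq
  have hke₂ : k.2.1 = e.2.1 := congrArg Prod.fst hke
  have hle : e.1.1 < e.2.1 := h.lt e he
  have hlk : k.1.1 < k.2.1 := h.lt k hk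
  have hmax : max e.1.1 k.1.1 < e.2.1 := max_lt hle (hke₂ ▸ hlk)
  obtain ⟨p, hp⟩ := exists_between hmax
  have hfk : heightAt f e.2.1 < heightAt k e.2.1 := by
    rw [← hke₂, heightAt_snd hlk, hke, ← heightAt_snd hle]
    exact (heightAt_lt_heightAt_iff hf.fst_eq hle).2 hf.slope_lt
  refine h.not_heightAt_lt_of_isNextBelow he hk hf le_rfl hef hke₂.ge hempty hp
    (h.heightAt_lt_heightAt hf.mem hk (hfe₁.trans_le (le_max_left _ _)) (le_max_right _ _) hef
      hke₂.ge hp ⟨hmax.le, le_rfl⟩ hfk) ?_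
  rw [heightAt_eq_add_segSlope_mul hlk, heightAt_eq_add_segSlope_mul hle, hke, add_lt_add_iff_left]
  exact mul_lt_mul_of_neg_right hslope (sub_neg.2 hp.2)

theorem isDirectlyAbove_of_isNextBelow (h : IsNoncrossing S D) {e f : Pt × Pt} (he : e ∈ D)
    (hf : IsNextBelow D f e) {w : Pt} (hwS : w ∈ S) (hw : w ∈ wedge f e) (hwe : w.1 < e.2.1)
    (hwf : w.1 ≤ f.2.1) (hempty : ∀ v ∈ S, v ∈ wedge f e → w.1 ≤ v.1) :
    IsDirectlyAbove D e w := by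
  obtain ⟨hew, hfw, hwe'⟩ := hw
  have hfe₁ : f.1.1 = e.1.1 := congrArg Prod.fst hf.fst_eq
  refine ⟨hew, hwe, hwe'.lt_of_ne' (h.heightAt_ne he hwS hew hwe), fun k hk hkw hwk hlt => ?_⟩
  by_contra! hke
  have hmax : max e.1.1 k.1.1 < w.1 := max_lt hew hkw
  obtain ⟨p, hp⟩ := exists_between hmax
  have hwmem : w.1 ∈ Set.Icc (max e.1.1 k.1.1) w.1 := ⟨hmax.le, le_rfl⟩
  exact h.not_heightAt_lt_of_isNextBelow he hk hf hwe.le hwf hwk.le hempty hp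
    (h.heightAt_lt_heightAt hf.mem hk (hfe₁.trans_le (le_max_left _ _)) (le_max_right _ _) hwf
      hwk.le hp hwmem (hfw.trans_lt hlt))
    (h.heightAt_lt_heightAt hk he (le_max_right _ _) (le_max_left _ _) hwk.le hwe.le hp hwmem hke)

theorem isLowestOutgoing_or_isLowestIncoming_or_isDirectlyAbove (h : IsNoncrossing S D)
    {e : Pt × Pt} (he : e ∈ D) :
    IsLowestOutgoing D e ∨ IsLowestIncoming D e ∨ ∃ w ∈ S, IsDirectlyAbove D e w := by
  by_cases hlow : IsLowestOutgoing D e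
  · exact .inl hlow
  obtain ⟨f, hf⟩ := exists_isNextBelow hlow
  obtain ⟨w, hwS, hw, hwe, hwf, hempty⟩ := h.exists_leftmost_mem_wedge he hf
  rcases hwe.lt_or_eq with hlt | heq
  · exact .inr (.inr ⟨w, hwS, h.isDirectlyAbove_of_isNextBelow he hf hwS hw hlt hwf hempty⟩)
  · exact .inr (.inl (h.isLowestIncoming_of_isNextBelow he hf (heq ▸ hwf) (heq ▸ hempty)))

theorem eq_of_segSlope_eq_of_fst_eq (h : IsNoncrossing S D) {e f : Pt × Pt} (he : e ∈ D)
    (hf : f ∈ D) (h₁ : e.1 = f.1) (hs : segSlope e = segSlope f) : e = f := by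
  obtain ⟨x, hx, hx'⟩ := exists_between (lt_min (h.lt e he) (h₁ ▸ h.lt f hf))
  rw [lt_min_iff] at hx'
  exact h.eq_of_heightAt_eq he hf hx hx'.1 (h₁ ▸ hx) hx'.2 (by rw [heightAt, heightAt, h₁, hs])

theorem eq_of_segSlope_eq_of_snd_eq (h : IsNoncrossing S D) {e f : Pt × Pt} (he : e ∈ D)
    (hf : f ∈ D) (h₂ : e.2 = f.2) (hs : segSlope e = segSlope f) : e = f := by
  obtain ⟨x, hx, hx'⟩ := exists_between (max_lt (h.lt e he) (h₂ ▸ h.lt f hf))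
  rw [max_lt_iff] at hx
  exact h.eq_of_heightAt_eq he hf hx.1 hx' hx.2 (h₂ ▸ hx') (by
    rw [heightAt_eq_add_segSlope_mul (h.lt e he), heightAt_eq_add_segSlope_mul (h.lt f hf), h₂, hs])

open Classical in
theorem card_isLowestOutgoing_le (h : IsNoncrossing S D) :
    (D.filter (IsLowestOutgoing D)).card ≤ S.card := by
  refine Finset.card_le_card_of_injOn Prod.fst
    (fun e he => h.fst_mem e (Finset.mem_filter.1 he).1) fun e he f hf hef => ?_
  obtain ⟨heD, he⟩ := Finset.mem_filter.1 he
  obtain ⟨hfD, hf⟩ := Finset.mem_filter.1 hf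
  exact h.eq_of_segSlope_eq_of_fst_eq heD hfD hef (le_antisymm (he f hfD hef.symm) (hf e heD hef))

open Classical in
theorem card_isLowestIncoming_le (h : IsNoncrossing S D) :
    (D.filter (IsLowestIncoming D)).card ≤ S.card := by
  refine Finset.card_le_card_of_injOn Prod.snd
    (fun e he => h.snd_mem e (Finset.mem_filter.1 he).1) fun e he f hf hef => ?_
  obtain ⟨heD, he⟩ := Finset.mem_filter.1 he
  obtain ⟨hfD, hf⟩ := Finset.mem_filter.1 hf
  exact h.eq_of_segSlope_eq_of_snd_eq heD hfD hef (le_antisymm (hf e heD hef) (he f hfD hef.symm))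

open Classical in
theorem card_isDirectlyAbove_le (h : IsNoncrossing S D) :
    (D.filter fun e => ∃ w ∈ S, IsDirectlyAbove D e w).card ≤ S.card := by
  choose! w hwS hw using fun e (he : ∃ w ∈ S, IsDirectlyAbove D e w) => he
  refine Finset.card_le_card_of_injOn w
    (fun e he => hwS e (Finset.mem_filter.1 he).2) fun e he f hf hef => ?_
  obtain ⟨heD, he⟩ := Finset.mem_filter.1 he
  obtain ⟨hfD, hf⟩ := Finset.mem_filter.1 hf
  have he := hw e he
  have hf : IsDirectlyAbove D f (w e) := hef ▸ hw f hf
  exact h.eq_of_heightAt_eq heD hfD he.left_lt he.lt_right hf.left_lt hf.lt_right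
    (le_antisymm (he.height_le f hfD hf.left_lt hf.lt_right hf.lt_height)
      (hf.height_le e heD he.left_lt he.lt_right he.lt_height))

theorem card_le (h : IsNoncrossing S D) : D.card ≤ 3 * S.card := by
  classical
  have hcover : D ⊆ D.filter (IsLowestOutgoing D) ∪ (D.filter (IsLowestIncoming D) ∪
      D.filter fun e => ∃ w ∈ S, IsDirectlyAbove D e w) := fun e he => by
    simpa [he] using h.isLowestOutgoing_or_isLowestIncoming_or_isDirectlyAbove he
  have hcard := (Finset.card_le_card hcover).trans (Finset.card_union_le _ _)
  have hcard' := Finset.card_union_le (D.filter (IsLowestIncoming D))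
    (D.filter fun e => ∃ w ∈ S, IsDirectlyAbove D e w)
  linarith [h.card_isLowestOutgoing_le, h.card_isLowestIncoming_le, h.card_isDirectlyAbove_le]

end IsNoncrossing

end PlaneSegments

/-- Adjacency in `G` directed to the right; its chains are the x-monotone paths. -/
def PSLG.RightAdj (G : PSLG) (a b : Pt) : Prop := s(a, b) ∈ G.E ∧ a.1 < b.1

open Classical in
theorem PSLG.isNoncrossing (G : PSLG) :
    IsNoncrossing G.V ((G.V ×ˢ G.V).filter fun p => G.RightAdj p.1 p.2) := by
  obtain ⟨-, hopen, hdisj⟩ := G.valid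
  refine ⟨fun e he => ?_, fun e he => ?_, fun e he => ?_, fun e he v hv => ?_,
    fun e he f hf hef => ?_⟩
  · exact (Finset.mem_product.1 (Finset.mem_filter.1 he).1).1
  · exact (Finset.mem_product.1 (Finset.mem_filter.1 he).1).2
  · exact (Finset.mem_filter.1 he).2.2
  · exact hopen e.1 e.2 (Finset.mem_filter.1 he).2.1 v hv
  · obtain ⟨-, heE, helt⟩ := Finset.mem_filter.1 he
    obtain ⟨-, hfE, hflt⟩ := Finset.mem_filter.1 hf
    refine Set.disjoint_iff_inter_eq_empty.2 (hdisj _ _ _ _ heE hfE fun heq => ?_)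
    rcases Sym2.eq_iff.1 heq with ⟨h, h'⟩ | ⟨h, h'⟩
    · exact hef (Prod.ext h h')
    · rw [h, h'] at helt
      exact lt_asymm helt hflt

theorem IsXMonotonePath.isChain {G : PSLG} {L : List Pt} (h : IsXMonotonePath G L) :
    L.IsChain G.RightAdj := by
  obtain ⟨⟨-, h₁⟩, h₂⟩ := h
  exact List.isChain_iff_getElem.2 fun i hi =>
    ⟨List.isChain_iff_getElem.1 h₁ i hi, List.isChain_iff_getElem.1 h₂ i hi⟩

theorem IsPathIn.mem_V {G : PSLG} {L : List Pt} (h : IsPathIn G L) {v : Pt} (hv : v ∈ L) :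
    v ∈ G.V := by
  obtain ⟨hlen, hc⟩ := h
  obtain ⟨i, hi, rfl⟩ := List.mem_iff_getElem.1 hv
  cases i with
  | zero => exact (G.valid.1 _ _ (List.isChain_iff_getElem.1 hc 0 (by omega))).1
  | succ i => exact (G.valid.1 _ _ (List.isChain_iff_getElem.1 hc i hi)).2.1

theorem setOf_isXMonotonePath_subset (G : PSLG) :
    {L | IsXMonotonePath G L} ⊆ {L | L ≠ [] ∧ L.IsChain G.RightAdj ∧ ∀ v ∈ L, v ∈ G.V} :=
  fun _ hL => ⟨List.ne_nil_of_length_pos (zero_lt_two.trans_le hL.1.1), hL.isChain,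
    fun _ hv => hL.1.mem_V hv⟩

/-- every PSLG on `n` points has at most `C·αⁿ` x-monotone paths,
where `α` is the unique real root of `x³ − x² − x − 1 = 0`. -/
theorem xMonotone_upper_bound :
    ∃ C : ℝ, 0 < C ∧ ∀ α : ℝ, 1 < α → α ^ 3 = α ^ 2 + α + 1 →
      ∀ (n : ℕ) (G : PSLG), G.V.card = n →
        (xMonCount G : ℝ) ≤ C * α ^ n := by
  refine ⟨45 / 8, by norm_num, fun α h₁ hα n G hn => ?_⟩
  subst hn
  have hR : ∀ a b, G.RightAdj a b → a.1 < b.1 := fun _ _ h => h.2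
  have hfin : {L | L ≠ [] ∧ L.IsChain G.RightAdj ∧ ∀ v ∈ L, v ∈ G.V}.Finite :=
    (finite_setOf_isChain hR G.V).subset fun _ hL => hL.2
  calc (xMonCount G : ℝ)
      ≤ {L | L ≠ [] ∧ L.IsChain G.RightAdj ∧ ∀ v ∈ L, v ∈ G.V}.ncard :=
        Nat.cast_le.2 (Set.ncard_le_ncard (setOf_isXMonotonePath_subset G) hfin)
    _ ≤ 45 / 8 * α ^ G.V.card :=
        ncard_setOf_isChain_le_of_card_le h₁ hα hR G.isNoncrossing.card_le

end
end

section
/- There exists a constant C > 0 such that for every n ∈ ℕ and every plane straight-line graph G on a set of n points in ℝ², the number of monotone paths in G (monotone in some direction, over all directions, a path and its reversal counted once) is at most C·n·αⁿ, where α is the unique real root of x³ − x² − x − 1 = 0. -/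
open scoped BigOperators

noncomputable section

/-! For a direction `(1, t)` separating the vertices, the monotone paths are the directed paths of
the orientation of `G` from left to right, after a shear that makes the direction horizontal.
Planarity forbids the seven kinds of edges around three consecutive vertices from being present
simultaneously, and if one kind is missing then the number `W i` of ways to continue a path beyond
the gap before the `i`-th vertex satisfies `W i ≤ W (i + 1) + W (i + 2) + W (i + 3) + 1`. Hence
each orientation has `O(αⁿ)` directed paths. The orientation changes with `t` only where `(1, t)` is
perpendicular to an edge, and `G` has at most `3n` edges, so there are at most `3n + 1` of them. -/

/-! ### Path counts and the tribonacci recursion -/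

section Tribonacci

variable {α : ℝ}

lemma three_halves_le_of_tribonacci (hα : 1 < α) (hα₃ : α ^ 3 = α ^ 2 + α + 1) : 3 / 2 ≤ α := by
  by_contra! h
  nlinarith [mul_pos (sub_pos.mpr hα) (sub_pos.mpr h), sq_nonneg α]

lemma le_two_of_tribonacci (hα₃ : α ^ 3 = α ^ 2 + α + 1) : α ≤ 2 := by
  by_contra! h
  nlinarith [sq_nonneg α]

lemma sum_range_pow_le_two_mul (hα : 3 / 2 ≤ α) (m : ℕ) :
    ∑ k ∈ Finset.range m, α ^ k ≤ 2 * α ^ m := by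
  have hgeom := geom_sum_mul α m
  have hnonneg : 0 ≤ ∑ k ∈ Finset.range m, α ^ k :=
    Finset.sum_nonneg fun k _ => pow_nonneg (by linarith) k
  nlinarith

lemma add_half_le_pow_of_tribonacci (hα : 1 < α) (hα₃ : α ^ 3 = α ^ 2 + α + 1) {W : ℕ → ℝ} {n : ℕ}
    (hone : ∀ i, n ≤ i → W i ≤ 1)
    (hrec : ∀ i, W i ≤ W (i + 1) + W (i + 2) + W (i + 3) + 1) (i : ℕ) :
    W i + 1 / 2 ≤ 3 / 2 * α ^ (n + 2 - i) := by
  induction hm : n - i using Nat.strong_induction_on generalizing i with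
  | _ m ih =>
    rcases le_or_gt n i with hi | hi
    · linarith [hone i hi, one_le_pow₀ (n := n + 2 - i) hα.le]
    · have h₁ := ih (n - (i + 1)) (by omega) (i + 1) rfl
      have h₂ := ih (n - (i + 2)) (by omega) (i + 2) rfl
      have h₃ := ih (n - (i + 3)) (by omega) (i + 3) rfl
      obtain ⟨k, rfl⟩ := Nat.exists_eq_add_of_lt hi
      rw [show i + k + 1 + 2 - (i + 1) = k + 2 by omega] at h₁
      rw [show i + k + 1 + 2 - (i + 2) = k + 1 by omega] at h₂
      rw [show i + k + 1 + 2 - (i + 3) = k by omega] at h₃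
      rw [show i + k + 1 + 2 - i = k + 3 by omega]
      have hpow : α ^ (k + 3) = α ^ (k + 2) + α ^ (k + 1) + α ^ k := by
        linear_combination α ^ k * hα₃
      linarith [hrec i]

end Tribonacci

/-- The three edges between `a`, `b`, `c`, an edge from each of `a`, `b` to a vertex beyond `c`,
and an edge to each of `b`, `c` from a vertex before `a`; here `r` is the order of the vertices. -/
structure IsFullTriple {ι : Type*} (r E : ι → ι → Prop) (a b c : ι) : Prop where
  edge_ab : E a b
  edge_bc : E b c
  edge_ac : E a c
  exit_a : ∃ d, r c d ∧ E a d
  exit_b : ∃ d, r c d ∧ E b d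
  enter_b : ∃ z, r z a ∧ E z b
  enter_c : ∃ z, r z a ∧ E z c

section CrossWeight

open Classical in
/-- The vertices in `[i, n)` that are entered by an edge coming from a vertex before `i`. -/
def crossing (n : ℕ) (E : ℕ → ℕ → Prop) (i : ℕ) : Finset ℕ :=
  {j ∈ Finset.Ico i n | ∃ k < i, E k j}

open Classical in
/-- The vertices below `n` that are entered by an edge from `i`. -/
def successors (n : ℕ) (E : ℕ → ℕ → Prop) (i : ℕ) : Finset ℕ :=
  {j ∈ Finset.range n | E i j}

/-- One plus the total weight of the vertices entered across the gap before `i`. -/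
def crossWeight (n : ℕ) (E : ℕ → ℕ → Prop) (P : ℕ → ℕ) (i : ℕ) : ℕ :=
  1 + ∑ j ∈ crossing n E i, P j

variable {n : ℕ} {E : ℕ → ℕ → Prop} {P : ℕ → ℕ} {i m : ℕ} {u : Finset ℕ}

lemma mem_crossing {j : ℕ} : j ∈ crossing n E i ↔ (i ≤ j ∧ j < n) ∧ ∃ k < i, E k j := by
  simp [crossing]

lemma mem_successors {j : ℕ} : j ∈ successors n E i ↔ j < n ∧ E i j := by
  simp [successors]

lemma crossWeight_eq_one (hi : n ≤ i) : crossWeight n E P i = 1 := by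
  simp [crossWeight, crossing, Finset.Ico_eq_empty_of_le hi]

lemma sum_le_sum_add_sum_of_subset_union {ι : Type*} [DecidableEq ι] {f : ι → ℕ}
    {s t v : Finset ι} (h : s ⊆ t ∪ v) : ∑ j ∈ s, f j ≤ ∑ j ∈ t, f j + ∑ j ∈ v, f j :=
  (Finset.sum_le_sum_of_subset h).trans (by
    rw [← Finset.sum_union_inter]
    exact Nat.le_add_right _ _)

lemma crossWeight_le_of_forall (him : i ≤ m)
    (h : ∀ k < i, ∀ j, i ≤ j → E k j → j ∈ u ∨ m ≤ j) :
    crossWeight n E P i ≤ ∑ j ∈ u, P j + crossWeight n E P m := by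
  have hsub : crossing n E i ⊆ u ∪ crossing n E m := fun j hj => by
    obtain ⟨hj, k, hk, hkj⟩ := mem_crossing.mp hj
    rw [Finset.mem_union, mem_crossing]
    exact (h k hk j hj.1 hkj).imp_right fun hmj => ⟨⟨hmj, hj.2⟩, k, hk.trans_le him, hkj⟩
  have hsum := sum_le_sum_add_sum_of_subset_union (f := P) hsub
  unfold crossWeight
  omega

lemma weight_le_of_forall_mem (hP : ∀ i, P i ≤ 1 + ∑ j ∈ successors n E i, P j)
    (h : ∀ j, E i j → j ∈ u) : P i ≤ 1 + ∑ j ∈ u, P j :=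
  (hP i).trans (Nat.add_le_add_left
    (Finset.sum_le_sum_of_subset fun j hj => h j (mem_successors.mp hj).2) 1)

lemma weight_le_of_forall (hP : ∀ i, P i ≤ 1 + ∑ j ∈ successors n E i, P j) (him : i < m)
    (h : ∀ j, E i j → j ∈ u ∨ m ≤ j) : P i ≤ ∑ j ∈ u, P j + crossWeight n E P m := by
  have hsub : successors n E i ⊆ u ∪ crossing n E m := fun j hj => by
    obtain ⟨hj, hij⟩ := mem_successors.mp hj
    rw [Finset.mem_union, mem_crossing]
    exact (h j hij).imp_right fun hmj => ⟨⟨hmj, hj⟩, i, him, hij⟩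
  have hsum := sum_le_sum_add_sum_of_subset_union (f := P) hsub
  have := hP i
  unfold crossWeight
  omega

lemma crossWeight_le_add_succ (i : ℕ) :
    crossWeight n E P i ≤ P i + crossWeight n E P (i + 1) := by
  simpa using crossWeight_le_of_forall (n := n) (E := E) (P := P) (u := {i}) (m := i + 1)
    (by omega) fun _ _ j hij _ => by grind

lemma weight_le_crossWeight_succ (hE : ∀ i j, E i j → i < j)
    (hP : ∀ i, P i ≤ 1 + ∑ j ∈ successors n E i, P j) (i : ℕ) :
    P i ≤ crossWeight n E P (i + 1) := by
  simpa using weight_le_of_forall (u := ∅) hP (Nat.lt_succ_self i) fun j hij => Or.inr (hE i j hij)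

lemma weight_le_of_not_two_exits (hE : ∀ i j, E i j → i < j)
    (hP : ∀ i, P i ≤ 1 + ∑ j ∈ successors n E i, P j)
    (h : ¬ (E i (i + 1) ∧ ∃ j, i + 1 < j ∧ E i j)) : P i ≤ crossWeight n E P (i + 2) + 1 := by
  by_cases hsucc : E i (i + 1)
  · have hle : P i ≤ 1 + P (i + 1) := by
      simpa using weight_le_of_forall_mem (u := {i + 1}) hP (i := i) (by grind)
    have : P (i + 1) ≤ crossWeight n E P (i + 2) := weight_le_crossWeight_succ hE hP (i + 1)
    omega
  · have hle : P i ≤ crossWeight n E P (i + 2) := by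
      simpa using weight_le_of_forall (u := ∅) hP (show i < i + 2 by omega) (by grind)
    omega

lemma weight_le_of_not_three_exits (hE : ∀ i j, E i j → i < j)
    (hP : ∀ i, P i ≤ 1 + ∑ j ∈ successors n E i, P j)
    (h : ¬ (E i (i + 1) ∧ E i (i + 2) ∧ ∃ j, i + 2 < j ∧ E i j)) :
    P i ≤ crossWeight n E P (i + 2) + crossWeight n E P (i + 3) + 1 := by
  have hP₁ : P (i + 1) ≤ crossWeight n E P (i + 2) := weight_le_crossWeight_succ hE hP (i + 1)
  have hP₂ : P (i + 2) ≤ crossWeight n E P (i + 3) := weight_le_crossWeight_succ hE hP (i + 2)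
  by_cases h₁ : E i (i + 1)
  · by_cases h₂ : E i (i + 2)
    · have hle : P i ≤ 1 + (P (i + 1) + P (i + 2)) := by
        simpa using weight_le_of_forall_mem (u := {i + 1, i + 2}) hP (i := i) (by grind)
      omega
    · have hle : P i ≤ P (i + 1) + crossWeight n E P (i + 3) := by
        simpa using weight_le_of_forall (u := {i + 1}) hP (show i < i + 3 by omega) (by grind)
      omega
  · have hle := weight_le_of_not_two_exits hE hP fun hboth => h₁ hboth.1
    omega

lemma crossWeight_le_of_not_two_entries (hE : ∀ i j, E i j → i < j)
    (hP : ∀ i, P i ≤ 1 + ∑ j ∈ successors n E i, P j)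
    (h : ¬ ((∃ k < i, E k (i + 1)) ∧ ∃ k < i, E k (i + 2))) :
    crossWeight n E P i ≤ P i + crossWeight n E P (i + 2) + crossWeight n E P (i + 3) := by
  by_cases henter : ∃ k < i, E k (i + 1)
  · have hle : crossWeight n E P i ≤ P i + P (i + 1) + crossWeight n E P (i + 3) := by
      simpa using crossWeight_le_of_forall (n := n) (E := E) (P := P) (u := {i, i + 1})
        (show i ≤ i + 3 by omega) (by grind)
    have : P (i + 1) ≤ crossWeight n E P (i + 2) := weight_le_crossWeight_succ hE hP (i + 1)
    omega
  · have hle : crossWeight n E P i ≤ P i + crossWeight n E P (i + 2) := by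
      simpa using crossWeight_le_of_forall (n := n) (E := E) (P := P) (u := {i})
        (show i ≤ i + 2 by omega) (by grind)
    omega

-- With `W = crossWeight n E P`, an edge kind missing from the triple improves one of the two bounds
-- `W i ≤ P i + W (i + 1)` and `P i ≤ W (i + 1)`, at `i` or at `i + 1`, by enough.
lemma crossWeight_le_tribonacci (hE : ∀ i j, E i j → i < j)
    (hP : ∀ i, P i ≤ 1 + ∑ j ∈ successors n E i, P j)
    (h : ¬ IsFullTriple (· < ·) E i (i + 1) (i + 2)) :
    crossWeight n E P i ≤ crossWeight n E P (i + 1) + crossWeight n E P (i + 2) +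
      crossWeight n E P (i + 3) + 1 := by
  have hW₀ : crossWeight n E P i ≤ P i + crossWeight n E P (i + 1) := crossWeight_le_add_succ i
  have hW₁ : crossWeight n E P (i + 1) ≤ P (i + 1) + crossWeight n E P (i + 2) :=
    crossWeight_le_add_succ (i + 1)
  have hP₀ := weight_le_crossWeight_succ hE hP i
  by_cases hexits : E i (i + 1) ∧ E i (i + 2) ∧ ∃ j, i + 2 < j ∧ E i j
  · by_cases hexits' : E (i + 1) (i + 2) ∧ ∃ j, i + 2 < j ∧ E (i + 1) j
    · have := crossWeight_le_of_not_two_entries hE hP fun hentries =>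
        h ⟨hexits.1, hexits'.1, hexits.2.1, hexits.2.2, hexits'.2, hentries.1, hentries.2⟩
      omega
    · have : P (i + 1) ≤ crossWeight n E P (i + 3) + 1 := weight_le_of_not_two_exits hE hP hexits'
      omega
  · have := weight_le_of_not_three_exits hE hP hexits
    omega

theorem weight_le_pow {α : ℝ} (hα : 1 < α) (hα₃ : α ^ 3 = α ^ 2 + α + 1)
    (hE : ∀ i j, E i j → i < j) (hP : ∀ i, P i ≤ 1 + ∑ j ∈ successors n E i, P j)
    (hfull : ∀ i, ¬ IsFullTriple (· < ·) E i (i + 1) (i + 2)) (i : ℕ) :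
    (P i : ℝ) ≤ 3 / 2 * α ^ (n + 1 - i) := by
  have hW := add_half_le_pow_of_tribonacci hα hα₃ (W := fun i => (crossWeight n E P i : ℝ))
    (n := n) (fun i hi => by simp [crossWeight_eq_one hi])
    (fun i => mod_cast crossWeight_le_tribonacci hE hP (hfull i)) (i + 1)
  have hPW : (P i : ℝ) ≤ crossWeight n E P (i + 1) :=
    mod_cast weight_le_crossWeight_succ hE hP i
  rw [show n + 2 - (i + 1) = n + 1 - i by omega] at hW
  linarith

theorem sum_weight_le_pow {α : ℝ} (hα : 1 < α) (hα₃ : α ^ 3 = α ^ 2 + α + 1)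
    (hE : ∀ i j, E i j → i < j) (hP : ∀ i, P i ≤ 1 + ∑ j ∈ successors n E i, P j)
    (hfull : ∀ i, ¬ IsFullTriple (· < ·) E i (i + 1) (i + 2)) :
    ∑ i ∈ Finset.range n, (P i : ℝ) ≤ 12 * α ^ n := by
  have hα₂ : α ≤ 2 := le_two_of_tribonacci hα₃
  have hpow : ∀ k, 0 ≤ α ^ k := fun k => pow_nonneg (by linarith) k
  calc ∑ i ∈ Finset.range n, (P i : ℝ)
      ≤ ∑ i ∈ Finset.range n, 3 / 2 * α ^ 2 * α ^ (n - 1 - i) := by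
        refine Finset.sum_le_sum fun i hi => (weight_le_pow hα hα₃ hE hP hfull i).trans_eq ?_
        have hi := Finset.mem_range.mp hi
        rw [mul_assoc, ← pow_add, show 2 + (n - 1 - i) = n + 1 - i by omega]
    _ = 3 / 2 * α ^ 2 * ∑ k ∈ Finset.range n, α ^ k := by
        rw [← Finset.mul_sum, Finset.sum_range_reflect (fun k => α ^ k)]
    _ ≤ 3 / 2 * α ^ 2 * (2 * α ^ n) := by
        gcongr
        exact sum_range_pow_le_two_mul (three_halves_le_of_tribonacci hα hα₃) n
    _ ≤ 12 * α ^ n := by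
        have hα₄ : α ^ 2 ≤ 4 := by nlinarith
        nlinarith [hpow n]

end CrossWeight

section Chains

variable {ι : Type*} {R : ι → ι → Prop}

/-- The chains of `R` starting at `a`, that is, the directed paths issuing from `a`. -/
def chainsFrom (R : ι → ι → Prop) (a : ι) : Set (List ι) :=
  {L | L.head? = some a ∧ L.IsChain R}

lemma chainsFrom_subset_insert {a : ι} {s : Set ι} (hs : ∀ b, R a b → b ∈ s) :
    chainsFrom R a ⊆ insert [a] (⋃ b ∈ s, List.cons a '' chainsFrom R b) := by
  rintro L ⟨hhead, hchain⟩
  match L with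
  | [x] => exact Or.inl (by simpa using hhead)
  | x :: y :: L =>
    obtain rfl : x = a := by simpa using hhead
    rw [List.isChain_cons_cons] at hchain
    exact Or.inr (Set.mem_biUnion (hs y hchain.1) ⟨y :: L, ⟨rfl, hchain.2⟩, rfl⟩)

lemma finite_chainsFrom (hwf : WellFounded (flip R)) (hfin : ∀ a, {b | R a b}.Finite) (a : ι) :
    (chainsFrom R a).Finite := by
  induction a using hwf.induction with
  | _ a ih =>
    refine Set.Finite.subset (Set.Finite.insert _ ?_) (chainsFrom_subset_insert fun b hb => hb)
    exact (hfin a).biUnion fun b hb => (ih b hb).image _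

lemma ncard_chainsFrom_le {a : ι} {s : Finset ι} (hs : ∀ b, R a b → b ∈ s)
    (hfin : ∀ b, (chainsFrom R b).Finite) :
    (chainsFrom R a).ncard ≤ 1 + ∑ b ∈ s, (chainsFrom R b).ncard := by
  have hfin' : (⋃ b ∈ s, List.cons a '' chainsFrom R b).Finite :=
    s.finite_toSet.biUnion fun b _ => (hfin b).image _
  calc (chainsFrom R a).ncard
      ≤ (insert [a] (⋃ b ∈ s, List.cons a '' chainsFrom R b)).ncard :=
        Set.ncard_le_ncard (chainsFrom_subset_insert hs) (hfin'.insert _)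
    _ ≤ (⋃ b ∈ s, List.cons a '' chainsFrom R b).ncard + 1 := Set.ncard_insert_le _ _
    _ ≤ 1 + ∑ b ∈ s, (chainsFrom R b).ncard := by
        rw [add_comm]
        exact Nat.add_le_add_left ((Finset.set_ncard_biUnion_le _ _).trans
          (Finset.sum_le_sum fun b _ => Set.ncard_image_le (hfin b))) 1

theorem finite_and_ncard_chains_le {α : ℝ} (hα : 1 < α) (hα₃ : α ^ 3 = α ^ 2 + α + 1) {n : ℕ}
    {E : ℕ → ℕ → Prop} (hE : ∀ i j, E i j → i < j ∧ j < n)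
    (hfull : ∀ i, ¬ IsFullTriple (· < ·) E i (i + 1) (i + 2)) :
    {L : List ℕ | 2 ≤ L.length ∧ L.IsChain E}.Finite ∧
      ({L : List ℕ | 2 ≤ L.length ∧ L.IsChain E}.ncard : ℝ) ≤ 12 * α ^ n := by
  have hsucc (i j : ℕ) (h : E i j) : j ∈ successors n E i := mem_successors.mpr ⟨(hE i j h).2, h⟩
  have hwf : WellFounded (flip E) :=
    Subrelation.wf (fun {i j} h => show n - i < n - j by have := hE j i h; omega)
      (InvImage.wf (n - ·) wellFounded_lt)
  have hfin : ∀ i, (chainsFrom E i).Finite :=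
    finite_chainsFrom hwf fun i => (successors n E i).finite_toSet.subset (hsucc i)
  have hcover : {L : List ℕ | 2 ≤ L.length ∧ L.IsChain E} ⊆
      ⋃ i ∈ Finset.range n, chainsFrom E i := by
    rintro (_ | ⟨i, _ | ⟨j, L⟩⟩) ⟨hlen, hchain⟩ <;> try simp at hlen
    have hij := hE i j (List.isChain_cons_cons.mp hchain).1
    exact Set.mem_biUnion (Finset.mem_range.mpr (hij.1.trans hij.2)) ⟨rfl, hchain⟩
  have hfin' : (⋃ i ∈ Finset.range n, chainsFrom E i).Finite :=
    (Finset.finite_toSet _).biUnion fun i _ => hfin i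
  refine ⟨hfin'.subset hcover, ?_⟩
  calc ({L : List ℕ | 2 ≤ L.length ∧ L.IsChain E}.ncard : ℝ)
      ≤ ∑ i ∈ Finset.range n, ((chainsFrom E i).ncard : ℝ) := mod_cast
        (Set.ncard_le_ncard hcover hfin').trans (Finset.set_ncard_biUnion_le _ _)
    _ ≤ 12 * α ^ n := sum_weight_le_pow hα hα₃ (fun i j h => (hE i j h).1)
        (fun i => ncard_chainsFrom_le (hsucc i) hfin) hfull

end Chains

/-! ### Arcs and planarity -/

section Line

/-- The slope of the line through two points; it is only meaningful when `a.1 ≠ b.1`. -/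
def chordSlope (a b : Pt) : ℝ := (b.2 - a.2) / (b.1 - a.1)

/-- The ordinate at abscissa `x` of the line through `a` and `b`. -/
def lineAt (a b : Pt) (x : ℝ) : ℝ := a.2 + chordSlope a b * (x - a.1)

variable {a b v : Pt}

@[simp] lemma lineAt_left (a b : Pt) : lineAt a b a.1 = a.2 := by simp [lineAt]

lemma lineAt_right (h : a.1 < b.1) : lineAt a b b.1 = b.2 := by
  rw [lineAt, chordSlope, div_mul_cancel₀ _ (sub_ne_zero.mpr h.ne')]
  ring

lemma continuous_lineAt (a b : Pt) : Continuous (lineAt a b) := by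
  unfold lineAt
  fun_prop

lemma lineAt_lt_lineAt_iff {c : Pt} {x : ℝ} (hx : a.1 < x) :
    lineAt a b x < lineAt a c x ↔ chordSlope a b < chordSlope a c := by
  simp only [lineAt, add_lt_add_iff_left]
  exact mul_lt_mul_iff_left₀ (sub_pos.mpr hx)

lemma lineAt_lt_iff (h : a.1 < v.1) :
    lineAt a b v.1 < v.2 ↔ chordSlope a b < chordSlope a v := by
  rw [← lineAt_lt_lineAt_iff h, lineAt_right h]

lemma lt_lineAt_iff (h : a.1 < v.1) :
    v.2 < lineAt a b v.1 ↔ chordSlope a v < chordSlope a b := by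
  rw [← lineAt_lt_lineAt_iff h, lineAt_right h]

lemma mk_lineAt_mem_openSegment {x : ℝ} (hax : a.1 < x) (hxb : x < b.1) :
    (x, lineAt a b x) ∈ openSegment ℝ a b := by
  have hab : 0 < b.1 - a.1 := by linarith
  rw [openSegment_eq_image']
  refine ⟨(x - a.1) / (b.1 - a.1), ⟨by apply div_pos <;> linarith, ?_⟩, ?_⟩
  · rw [div_lt_one hab]
    linarith
  · ext
    · simp only [Prod.fst_add, Prod.smul_fst, Prod.fst_sub, smul_eq_mul, div_mul_cancel₀ _ hab.ne',
        add_sub_cancel]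
    · simp only [Prod.snd_add, Prod.smul_snd, Prod.snd_sub, smul_eq_mul, lineAt, chordSlope]
      ring

/-- The reflection of the plane in the horizontal axis. -/
def reflection : Pt ≃ₗ[ℝ] Pt := (LinearEquiv.refl ℝ ℝ).prodCongr (LinearEquiv.neg ℝ)

lemma lineAt_reflection (a b : Pt) (x : ℝ) :
    lineAt (reflection a) (reflection b) x = -lineAt a b x := by
  simp only [lineAt, chordSlope, reflection, LinearEquiv.prodCongr_apply, LinearEquiv.refl_apply,
    LinearEquiv.neg_apply]
  ring

end Line

namespace PSLG

/-- `G.Arc a b` means that `ab` is an edge of `G` whose left endpoint is `a`. -/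
structure Arc (G : PSLG) (a b : Pt) : Prop where
  mem_edges : s(a, b) ∈ G.E
  lt : a.1 < b.1

/-- The vertices of `G` have pairwise distinct abscissas, so that every edge is an arc. -/
def DistinctX (G : PSLG) : Prop := Set.InjOn Prod.fst (G.V : Set Pt)

variable {G : PSLG} {a b c d v : Pt} {x y : ℝ}

namespace Arc

lemma left_mem (h : G.Arc a b) : a ∈ G.V := (G.valid.1 a b h.mem_edges).1

lemma right_mem (h : G.Arc a b) : b ∈ G.V := (G.valid.1 a b h.mem_edges).2.1

lemma lineAt_ne (h : G.Arc a b) (hv : v ∈ G.V) (hav : a.1 < v.1) (hvb : v.1 < b.1) :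
    lineAt a b v.1 ≠ v.2 := by
  intro heq
  refine G.valid.2.1 a b h.mem_edges v hv ?_
  have := mk_lineAt_mem_openSegment hav hvb
  rwa [heq] at this

lemma eq_of_lineAt_eq (h : G.Arc a b) (h' : G.Arc c d) (hx : x ∈ Set.Ioo a.1 b.1)
    (hx' : x ∈ Set.Ioo c.1 d.1) (heq : lineAt a b x = lineAt c d x) : a = c ∧ b = d := by
  by_contra hne
  have hedges : s(a, b) ≠ s(c, d) := by
    rw [Ne, Sym2.eq_iff]
    rintro (heq | ⟨rfl, rfl⟩)
    · exact hne heq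
    · exact lt_asymm h.lt h'.lt
  have hmem := mk_lineAt_mem_openSegment hx.1 hx.2
  have hmem' := mk_lineAt_mem_openSegment hx'.1 hx'.2
  rw [← heq] at hmem'
  exact Set.disjoint_left.mp
    (Set.disjoint_iff_inter_eq_empty.mpr (G.valid.2.2 a b c d h.mem_edges h'.mem_edges hedges))
    hmem hmem'

lemma eq_of_chordSlope_eq (h : G.Arc a b) (h' : G.Arc a c)
    (heq : chordSlope a b = chordSlope a c) : b = c := by
  obtain ⟨x, hax, hx⟩ := exists_between (lt_min h.lt h'.lt)
  obtain ⟨hxb, hxc⟩ := lt_min_iff.mp hx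
  exact (h.eq_of_lineAt_eq h' ⟨hax, hxb⟩ ⟨hax, hxc⟩ (by rw [lineAt, lineAt, heq])).2

lemma lineAt_le_of_lineAt_lt (h : G.Arc a b) (h' : G.Arc c d)
    (hx : x ∈ Set.Icc a.1 b.1 ∩ Set.Icc c.1 d.1) (hy : y ∈ Set.Icc a.1 b.1 ∩ Set.Icc c.1 d.1)
    (hlt : lineAt a b x < lineAt c d x) : lineAt a b y ≤ lineAt c d y := by
  by_contra! hgt
  have hcont : Continuous fun z => lineAt a b z - lineAt c d z :=
    (continuous_lineAt a b).sub (continuous_lineAt c d)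
  obtain ⟨z, hz, hz₀⟩ : ∃ z ∈ Set.Ioo a.1 b.1 ∩ Set.Ioo c.1 d.1,
      lineAt a b z - lineAt c d z = 0 := by
    obtain ⟨⟨hax, hxb⟩, hcx, hxd⟩ := hx
    obtain ⟨⟨hay, hyb⟩, hcy, hyd⟩ := hy
    rcases le_total x y with hxy | hyx
    · obtain ⟨z, ⟨hxz, hzy⟩, hz⟩ := intermediate_value_Ioo hxy hcont.continuousOn
        ⟨sub_neg.mpr hlt, sub_pos.mpr hgt⟩
      exact ⟨z, ⟨⟨by linarith, by linarith⟩, by linarith, by linarith⟩, hz⟩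
    · obtain ⟨z, ⟨hyz, hzx⟩, hz⟩ := intermediate_value_Ioo' hyx hcont.continuousOn
        ⟨sub_neg.mpr hlt, sub_pos.mpr hgt⟩
      exact ⟨z, ⟨⟨by linarith, by linarith⟩, by linarith, by linarith⟩, hz⟩
  obtain ⟨rfl, rfl⟩ := h.eq_of_lineAt_eq h' hz.1 hz.2 (sub_eq_zero.mp hz₀)
  exact lt_irrefl _ hlt

end Arc

/-- The image of a plane straight-line graph under a linear automorphism of the plane. -/
def map (G : PSLG) (f : Pt ≃ₗ[ℝ] Pt) : PSLG where
  V := G.V.map f.toEquiv.toEmbedding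
  E := G.E.map f.toEquiv.toEmbedding.sym2Map
  valid := by
    obtain ⟨hends, havoid, hdisj⟩ := G.valid
    have himage (a b : Pt) : openSegment ℝ (f a) (f b) = f '' openSegment ℝ a b :=
      (image_openSegment ℝ f.toLinearMap.toAffineMap a b).symm
    have hV (v : Pt) : f v ∈ G.V.map f.toEquiv.toEmbedding ↔ v ∈ G.V := Finset.mem_map' _
    have hE (a b : Pt) : s(f a, f b) ∈ G.E.map f.toEquiv.toEmbedding.sym2Map ↔ s(a, b) ∈ G.E :=
      Finset.mem_map' (a := s(a, b)) _
    refine ⟨f.surjective.forall₂.mpr fun a b hab => ?_,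
      f.surjective.forall₂.mpr fun a b hab => f.surjective.forall.mpr fun v hv => ?_,
      f.surjective.forall₂.mpr fun a b => f.surjective.forall₂.mpr fun c d hab hcd hne => ?_⟩
    · obtain ⟨ha, hb, hne⟩ := hends a b ((hE a b).mp hab)
      exact ⟨(hV a).mpr ha, (hV b).mpr hb, f.injective.ne hne⟩
    · rw [himage, f.injective.mem_set_image]
      exact havoid a b ((hE a b).mp hab) v ((hV v).mp hv)
    · rw [himage, himage, ← Set.image_inter f.injective, Set.image_eq_empty]
      exact hdisj a b c d ((hE a b).mp hab) ((hE c d).mp hcd)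
        fun heq => hne (congrArg (Sym2.map f) heq)

variable {f : Pt ≃ₗ[ℝ] Pt}

@[simp] lemma card_V_map : (G.map f).V.card = G.V.card := Finset.card_map _

@[simp] lemma card_E_map : (G.map f).E.card = G.E.card := Finset.card_map _

@[simp] lemma apply_mem_V_map : f v ∈ (G.map f).V ↔ v ∈ G.V :=
  Finset.mem_map' f.toEquiv.toEmbedding

@[simp] lemma mk_apply_mem_E_map : s(f a, f b) ∈ (G.map f).E ↔ s(a, b) ∈ G.E :=
  Finset.mem_map' (a := s(a, b)) f.toEquiv.toEmbedding.sym2Map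

lemma distinctX_map_iff :
    (G.map f).DistinctX ↔ ∀ a ∈ G.V, ∀ b ∈ G.V, (f a).1 = (f b).1 → a = b := by
  refine ⟨fun h a ha b hb hab => f.injective
    (h (apply_mem_V_map.mpr ha) (apply_mem_V_map.mpr hb) hab), fun h => ?_⟩
  refine f.surjective.forall.mpr fun a ha => f.surjective.forall.mpr fun b hb hab => ?_
  exact congrArg f (h a (apply_mem_V_map.mp ha) b (apply_mem_V_map.mp hb) hab)

lemma arc_map_iff : (G.map f).Arc (f a) (f b) ↔ s(a, b) ∈ G.E ∧ (f a).1 < (f b).1 :=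
  ⟨fun h => ⟨mk_apply_mem_E_map.mp h.mem_edges, h.lt⟩,
    fun h => ⟨mk_apply_mem_E_map.mpr h.1, h.2⟩⟩

section FullTriple

variable {p q r s : Pt}

lemma Arc.lineAt_lt_of_staggered (hpr : G.Arc p r) (hqs : G.Arc q s) (hpq : p.1 < q.1)
    (hqr : q.1 < r.1) (hrs : r.1 < s.1) (hlt : q.2 < lineAt p r q.1) : lineAt q s r.1 < r.2 := by
  refine lt_of_le_of_ne ?_ (hqs.lineAt_ne hpr.right_mem hqr hrs)
  rw [← lineAt_left q s] at hlt
  rw [← lineAt_right hpr.lt]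
  exact hqs.lineAt_le_of_lineAt_lt hpr ⟨⟨le_rfl, hqs.lt.le⟩, hpq.le, hqr.le⟩
    ⟨⟨hqr.le, hrs.le⟩, hpr.lt.le, le_rfl⟩ hlt

lemma Arc.lt_lineAt_of_staggered (hpr : G.Arc p r) (hqs : G.Arc q s) (hpq : p.1 < q.1)
    (hqr : q.1 < r.1) (hrs : r.1 < s.1) (hlt : lineAt p r q.1 < q.2) : r.2 < lineAt q s r.1 := by
  refine lt_of_le_of_ne ?_ (hqs.lineAt_ne hpr.right_mem hqr hrs).symm
  rw [← lineAt_left q s] at hlt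
  rw [← lineAt_right hpr.lt]
  exact hpr.lineAt_le_of_lineAt_lt hqs ⟨⟨hpq.le, hqr.le⟩, le_rfl, hqs.lt.le⟩
    ⟨⟨hpr.lt.le, le_rfl⟩, hqr.le, hrs.le⟩ hlt

lemma Arc.lt_lineAt_right_of_nested (hps : G.Arc p s) (hqr : G.Arc q r) (hpq : p.1 ≤ q.1)
    (hrs : r.1 < s.1) (hlt : q.2 < lineAt p s q.1) : r.2 < lineAt p s r.1 := by
  have hltqr := hqr.lt
  refine lt_of_le_of_ne ?_ (hps.lineAt_ne hqr.right_mem (hpq.trans_lt hltqr) hrs).symm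
  rw [← lineAt_left q r] at hlt
  rw [← lineAt_right hltqr]
  exact hqr.lineAt_le_of_lineAt_lt hps ⟨⟨le_rfl, hltqr.le⟩, hpq, by linarith⟩
    ⟨⟨hltqr.le, le_rfl⟩, by linarith, hrs.le⟩ hlt

lemma Arc.lt_lineAt_left_of_nested (hps : G.Arc p s) (hqr : G.Arc q r) (hpq : p.1 < q.1)
    (hrs : r.1 ≤ s.1) (hlt : r.2 < lineAt p s r.1) : q.2 < lineAt p s q.1 := by
  have hltqr := hqr.lt
  refine lt_of_le_of_ne ?_ (hps.lineAt_ne hqr.left_mem hpq (hltqr.trans_le hrs)).symm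
  rw [← lineAt_left q r]
  rw [← lineAt_right hltqr] at hlt
  exact hqr.lineAt_le_of_lineAt_lt hps ⟨⟨hltqr.le, le_rfl⟩, by linarith, hrs⟩
    ⟨⟨le_rfl, hltqr.le⟩, hpq.le, by linarith⟩ hlt

lemma not_isFullTriple_of_lineAt_lt (hlt : lineAt a c b.1 < b.2) :
    ¬ IsFullTriple (fun p q : Pt => p.1 < q.1) G.Arc a b c := by
  rintro ⟨hab, hbc, hac, ⟨d, hcd, had⟩, ⟨d', hcd', hbd'⟩, ⟨z', hza', hzb'⟩, z, hza, hzc⟩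
  rcases (hzc.lineAt_ne hac.left_mem hza hac.lt).lt_or_gt with h | h
  · have hc_lt_ad := hzc.lt_lineAt_of_staggered had hza hac.lt hcd h
    have hb_lt_ad := had.lt_lineAt_left_of_nested hbc hab.lt hcd.le hc_lt_ad
    rcases (hzb'.lineAt_ne hab.left_mem hza' hab.lt).lt_or_gt with h' | h'
    · exact hlt.not_gt (hzb'.lt_lineAt_of_staggered hac hza' hab.lt hbc.lt h')
    · exact hb_lt_ad.not_gt
        (hzb'.lineAt_lt_of_staggered had hza' hab.lt (hbc.lt.trans hcd) h')
  · have hb_lt_zc := hzc.lt_lineAt_right_of_nested hab hza.le hbc.lt h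
    have hbd_lt_c := hzc.lineAt_lt_of_staggered hbd' (hza.trans hab.lt) hbc.lt hcd' hb_lt_zc
    exact hbd_lt_c.not_gt (hac.lt_lineAt_of_staggered hbd' hab.lt hbc.lt hcd' hlt)

lemma not_isFullTriple : ¬ IsFullTriple (fun p q : Pt => p.1 < q.1) G.Arc a b c := by
  intro h
  rcases (h.edge_ac.lineAt_ne h.edge_ab.right_mem h.edge_ab.lt h.edge_bc.lt).lt_or_gt with hlt | hgt
  · exact not_isFullTriple_of_lineAt_lt hlt h
  · refine not_isFullTriple_of_lineAt_lt (G := G.map reflection) (a := reflection a)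
      (b := reflection b) (c := reflection c) ?_ ?_
    · rw [show (reflection b).1 = b.1 from rfl, lineAt_reflection]
      exact neg_lt_neg hgt
    · have harc {p q : Pt} (hpq : G.Arc p q) :
          (G.map reflection).Arc (reflection p) (reflection q) :=
        arc_map_iff.mpr ⟨hpq.mem_edges, hpq.lt⟩
      obtain ⟨d, hcd, had⟩ := h.exit_a
      obtain ⟨d', hcd', hbd'⟩ := h.exit_b
      obtain ⟨z, hza, hzb⟩ := h.enter_b
      obtain ⟨z', hza', hzc⟩ := h.enter_c
      exact ⟨harc h.edge_ab, harc h.edge_bc, harc h.edge_ac, ⟨reflection d, hcd, harc had⟩,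
        ⟨reflection d', hcd', harc hbd'⟩, ⟨reflection z, hza, harc hzb⟩,
        ⟨reflection z', hza', harc hzc⟩⟩

end FullTriple

end PSLG

/-! ### The number of edges -/

namespace PSLG

/-- A wedge of `G`: `c` is the endpoint of the arc from `a` following the arc `ab` in order of
slope, and `m`, the apex, is a leftmost vertex to the right of `a` between these two arcs. -/
structure IsWedge (G : PSLG) (a b c m : Pt) : Prop where
  lower : G.Arc a b
  upper : G.Arc a c
  slope_lt : chordSlope a b < chordSlope a c
  next : ∀ d, G.Arc a d → chordSlope a b < chordSlope a d → chordSlope a c ≤ chordSlope a d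
  mem : m ∈ G.V
  lt : a.1 < m.1
  le_slope : chordSlope a b ≤ chordSlope a m
  slope_le : chordSlope a m ≤ chordSlope a c
  leftmost : ∀ w ∈ G.V, a.1 < w.1 → chordSlope a b ≤ chordSlope a w →
    chordSlope a w ≤ chordSlope a c → m.1 ≤ w.1

variable {G : PSLG} {a b c a' b' c' d m w : Pt}

open Classical in
lemma exists_isWedge (hb : G.Arc a b) (hd : G.Arc a d)
    (hlt : chordSlope a b < chordSlope a d) : ∃ c m, G.IsWedge a b c m := by
  obtain ⟨c, hc, hnext⟩ := Finset.exists_min_image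
    {c ∈ G.V | G.Arc a c ∧ chordSlope a b < chordSlope a c} (chordSlope a)
    ⟨d, by simp [hd, hd.right_mem, hlt]⟩
  simp only [Finset.mem_filter] at hc hnext
  obtain ⟨m, hm, hleft⟩ := Finset.exists_min_image
    {w ∈ G.V | a.1 < w.1 ∧ chordSlope a b ≤ chordSlope a w ∧ chordSlope a w ≤ chordSlope a c}
    Prod.fst ⟨c, by simp [hc.1, hc.2.1.lt, hc.2.2.le]⟩
  simp only [Finset.mem_filter] at hm hleft
  exact ⟨c, m, hb, hc.2.1, hc.2.2, fun d hd hlt => hnext d ⟨hd.right_mem, hd, hlt⟩, hm.1, hm.2.1,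
    hm.2.2.1, hm.2.2.2, fun w hw haw hbw hwc => hleft w ⟨hw, haw, hbw, hwc⟩⟩

namespace IsWedge

lemma fst_le_lower (h : G.IsWedge a b c m) : m.1 ≤ b.1 :=
  h.leftmost b h.lower.right_mem h.lower.lt le_rfl h.slope_lt.le

lemma fst_le_upper (h : G.IsWedge a b c m) : m.1 ≤ c.1 :=
  h.leftmost c h.upper.right_mem h.upper.lt h.slope_lt.le le_rfl

lemma lineAt_lower_lt (hG : G.DistinctX) (h : G.IsWedge a b c m) (hm : m ≠ b) :
    lineAt a b m.1 < m.2 := by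
  have hle : lineAt a b m.1 ≤ m.2 := not_lt.mp ((lt_lineAt_iff h.lt).not.mpr h.le_slope.not_gt)
  have hmb : m.1 ≠ b.1 := fun heq => hm (hG h.mem h.lower.right_mem heq)
  exact hle.lt_of_ne (h.lower.lineAt_ne h.mem h.lt (h.fst_le_lower.lt_of_ne hmb))

lemma le_lineAt_upper (h : G.IsWedge a b c m) : m.2 ≤ lineAt a c m.1 :=
  not_lt.mp ((lineAt_lt_iff h.lt).not.mpr h.slope_le.not_gt)

lemma lt_lineAt_or_lineAt_lt (h : G.IsWedge a b c m) (hw : w ∈ G.V) (haw : a.1 < w.1)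
    (hwm : w.1 < m.1) : w.2 < lineAt a b w.1 ∨ lineAt a c w.1 < w.2 := by
  rw [lt_lineAt_iff haw, lineAt_lt_iff haw]
  by_contra! hbetween
  exact hwm.not_ge (h.leftmost w hw haw hbetween.1 hbetween.2)

lemma not_fst_lt (h : G.IsWedge a b c m) (h' : G.IsWedge a' b' c' m)
    (hlt : lineAt a b m.1 < lineAt a' c' m.1) (hlt' : lineAt a' b' m.1 < lineAt a c m.1) :
    ¬ a.1 < a'.1 := by
  intro haa'
  have ha'm := h'.lt.le
  rcases h.lt_lineAt_or_lineAt_lt h'.lower.left_mem haa' h'.lt with hbelow | habove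
  · rw [← lineAt_left a' c'] at hbelow
    exact hlt.not_ge (h'.upper.lineAt_le_of_lineAt_lt h.lower
      ⟨⟨le_rfl, h'.upper.lt.le⟩, haa'.le, ha'm.trans h.fst_le_lower⟩
      ⟨⟨ha'm, h'.fst_le_upper⟩, h.lt.le, h.fst_le_lower⟩ hbelow)
  · rw [← lineAt_left a' b'] at habove
    exact hlt'.not_ge (h.upper.lineAt_le_of_lineAt_lt h'.lower
      ⟨⟨haa'.le, ha'm.trans h.fst_le_upper⟩, le_rfl, h'.lower.lt.le⟩
      ⟨⟨h.lt.le, h.fst_le_upper⟩, ha'm, h'.fst_le_lower⟩ habove)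

lemma eq_left_of_lineAt_lt (hG : G.DistinctX) (h : G.IsWedge a b c m) (h' : G.IsWedge a' b' c' m)
    (hlt : lineAt a b m.1 < lineAt a' c' m.1) (hlt' : lineAt a' b' m.1 < lineAt a c m.1) :
    a = a' :=
  hG h.lower.left_mem h'.lower.left_mem
    (le_antisymm (not_lt.mp (h'.not_fst_lt h hlt' hlt)) (not_lt.mp (h.not_fst_lt h' hlt hlt')))

lemma chordSlope_le (hG : G.DistinctX) (h : G.IsWedge a b c m) (h' : G.IsWedge a b' c' m)
    (hm' : m ≠ b') : chordSlope a b' ≤ chordSlope a b := by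
  by_contra! hlt
  have hcb' : chordSlope a c ≤ chordSlope a b' := h.next b' h'.lower hlt
  have hb'm : chordSlope a b' < chordSlope a m :=
    (lineAt_lt_iff h'.lt).mp (h'.lineAt_lower_lt hG hm')
  exact (hcb'.trans_lt hb'm).not_ge h.slope_le

lemma eq_of_ne (hG : G.DistinctX) (h : G.IsWedge a b c m) (h' : G.IsWedge a' b' c' m)
    (hm : m ≠ b) (hm' : m ≠ b') : a = a' ∧ b = b' := by
  obtain rfl : a = a' := h.eq_left_of_lineAt_lt hG h'
    ((h.lineAt_lower_lt hG hm).trans_le h'.le_lineAt_upper)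
    ((h'.lineAt_lower_lt hG hm').trans_le h.le_lineAt_upper)
  exact ⟨rfl, h.lower.eq_of_chordSlope_eq h'.lower
    (le_antisymm (h'.chordSlope_le hG h hm) (h.chordSlope_le hG h' hm'))⟩

lemma eq_of_eq (hG : G.DistinctX) (h : G.IsWedge a m c m) (h' : G.IsWedge a' m c' m) :
    a = a' := by
  refine h.eq_left_of_lineAt_lt hG h' ?_ ?_
  · rw [lineAt_right h.lt]
    exact (lt_lineAt_iff h'.lt).mpr h'.slope_lt
  · rw [lineAt_right h'.lt]
    exact (lt_lineAt_iff h.lt).mpr h.slope_lt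

end IsWedge

/-- The charging scheme bounding the number of edges: an arc `ab` is charged to `a` if it is the
steepest arc leaving `a`, and otherwise to the apex of its wedge; the second component records
which case occurs, the apex `b` being distinguished. -/
inductive ChargedTo (G : PSLG) : Pt → Pt → Pt × Fin 3 → Prop
  | steepest {a b : Pt} (arc : G.Arc a b)
      (max : ∀ c, G.Arc a c → chordSlope a c ≤ chordSlope a b) : ChargedTo G a b (a, 0)
  | apex {a b c m : Pt} (wedge : G.IsWedge a b c m) (ne : m ≠ b) : ChargedTo G a b (m, 1)
  | tip {a b c : Pt} (wedge : G.IsWedge a b c b) : ChargedTo G a b (b, 2)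

lemma Arc.exists_chargedTo (h : G.Arc a b) : ∃ v ∈ G.V, ∃ i, G.ChargedTo a b (v, i) := by
  by_cases hmax : ∀ c, G.Arc a c → chordSlope a c ≤ chordSlope a b
  · exact ⟨a, h.left_mem, 0, .steepest h hmax⟩
  · push Not at hmax
    obtain ⟨d, hd, hlt⟩ := hmax
    obtain ⟨c, m, hwedge⟩ := exists_isWedge h hd hlt
    by_cases hm : m = b
    · exact ⟨b, h.right_mem, 2, .tip (hm ▸ hwedge)⟩
    · exact ⟨m, hwedge.mem, 1, .apex hwedge hm⟩

lemma ChargedTo.unique (hG : G.DistinctX) {x : Pt × Fin 3} (h : G.ChargedTo a b x)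
    (h' : G.ChargedTo a' b' x) : a = a' ∧ b = b' := by
  cases h with
  | steepest harc hmax =>
    cases h' with
    | steepest harc' hmax' =>
      exact ⟨rfl, harc.eq_of_chordSlope_eq harc' (le_antisymm (hmax' _ harc) (hmax _ harc'))⟩
  | apex hwedge hne =>
    cases h' with
    | apex hwedge' hne' => exact hwedge.eq_of_ne hG hwedge' hne hne'
  | tip hwedge =>
    cases h' with
    | tip hwedge' => exact ⟨hwedge.eq_of_eq hG hwedge', rfl⟩

lemma DistinctX.arc_or_arc (hG : G.DistinctX) (h : s(a, b) ∈ G.E) : G.Arc a b ∨ G.Arc b a := by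
  obtain ⟨ha, hb, hab⟩ := G.valid.1 a b h
  exact (lt_or_gt_of_ne (hG.ne ha hb hab)).imp (fun hlt => ⟨h, hlt⟩)
    fun hlt => ⟨Sym2.eq_swap ▸ h, hlt⟩

lemma DistinctX.card_edges_le (hG : G.DistinctX) : G.E.card ≤ 3 * G.V.card := by
  refine (Finset.card_le_card_of_forall_subsingleton
    (fun e x => ∃ a b, e = s(a, b) ∧ G.ChargedTo a b x) (t := G.V ×ˢ Finset.univ) ?_ ?_).trans_eq ?_
  · refine Sym2.ind fun a b he => ?_
    rcases hG.arc_or_arc he with h | h <;> obtain ⟨v, hv, i, hcharge⟩ := h.exists_chargedTo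
    · exact ⟨(v, i), by simp [hv], a, b, rfl, hcharge⟩
    · exact ⟨(v, i), by simp [hv], b, a, Sym2.eq_swap, hcharge⟩
  · rintro x - e ⟨-, a, b, rfl, h⟩ e' ⟨-, a', b', rfl, h'⟩
    obtain ⟨rfl, rfl⟩ := h.unique hG h'
    rfl
  · rw [Finset.card_product, Finset.card_univ, Fintype.card_fin, mul_comm]

end PSLG

/-! ### Paths monotone in the horizontal direction -/

section ListMap

variable {ι κ : Type*} {R : ι → ι → Prop} {L : List ι}

lemma exists_rel_of_isChain_of_mem (h : L.IsChain R) (hL : 2 ≤ L.length) {a : ι} (ha : a ∈ L) :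
    ∃ b, R a b ∨ R b a := by
  rw [List.isChain_iff_getElem] at h
  obtain ⟨i, hi, rfl⟩ := List.mem_iff_getElem.mp ha
  by_cases hlast : i + 1 < L.length
  · exact ⟨_, Or.inl (h i hlast)⟩
  · obtain ⟨j, rfl⟩ : ∃ j, i = j + 1 := ⟨i - 1, by omega⟩
    exact ⟨_, Or.inr (h j hi)⟩

lemma injOn_list_map {f : ι → κ} {s : Set ι} (hf : s.InjOn f) :
    {L : List ι | ∀ a ∈ L, a ∈ s}.InjOn (List.map f) := by
  intro L hL L' hL' h
  induction L generalizing L' with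
  | nil => simpa using h.symm
  | cons a L ih =>
    obtain ⟨b, K, rfl, hb, hK⟩ := List.map_eq_cons_iff.mp h.symm
    simp only [Set.mem_ofPred_eq, List.forall_mem_cons] at hL hL'
    rw [hf hL'.1 hL.1 hb, ih hL.2 hL'.2 hK.symm]

end ListMap

namespace PSLG

variable {G : PSLG} {p q : Pt}

open Classical in
/-- The number of vertices of `G` to the left of `p`. -/
def rank (G : PSLG) (p : Pt) : ℕ := {v ∈ G.V | v.1 < p.1}.card

lemma rank_le_rank (h : p.1 ≤ q.1) : G.rank p ≤ G.rank q := by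
  classical
  exact Finset.card_le_card
    (Finset.monotone_filter_right _ fun _ _ hv => lt_of_lt_of_le hv h)

lemma rank_lt_rank (hp : p ∈ G.V) (h : p.1 < q.1) : G.rank p < G.rank q := by
  classical
  refine Finset.card_lt_card ((Finset.ssubset_iff_of_subset ?_).mpr ⟨p, by simp [hp, h], by simp⟩)
  exact Finset.monotone_filter_right _ fun _ _ hv => lt_trans hv h

lemma fst_lt_of_rank_lt_rank (h : G.rank p < G.rank q) : p.1 < q.1 :=
  not_le.mp fun hle => h.not_ge (rank_le_rank hle)

lemma rank_lt_card (hp : p ∈ G.V) : G.rank p < G.V.card := by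
  classical
  exact Finset.card_lt_card (Finset.filter_ssubset.mpr ⟨p, hp, lt_irrefl p.1⟩)

lemma DistinctX.injOn_rank (hG : G.DistinctX) : Set.InjOn G.rank G.V := by
  intro p hp q hq h
  refine hG hp hq (le_antisymm ?_ ?_) <;> refine not_lt.mp fun hlt => ?_
  · exact (rank_lt_rank hq hlt).ne' h
  · exact (rank_lt_rank hp hlt).ne h

lemma DistinctX.not_isFullTriple_rank (hG : G.DistinctX) {i j k : ℕ} :
    ¬ IsFullTriple (· < ·) (Relation.Map G.Arc G.rank G.rank) i j k := by
  rintro ⟨⟨a, b, hab, rfl, rfl⟩, ⟨b', c, hbc, hb', rfl⟩, ⟨a', c', hac, ha', hc'⟩,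
    ⟨_, hcd, a₁, d, had, ha₁, rfl⟩, ⟨_, hcd', b₁, d', hbd', hb₁, rfl⟩,
    ⟨_, hza, z, b₂, hzb, rfl, hb₂⟩, ⟨_, hza', z', c₂, hzc, rfl, hc₂⟩⟩
  obtain rfl := hG.injOn_rank hbc.left_mem hab.right_mem hb'
  obtain rfl := hG.injOn_rank hac.left_mem hab.left_mem ha'
  obtain rfl := hG.injOn_rank hac.right_mem hbc.right_mem hc'
  obtain rfl := hG.injOn_rank had.left_mem hab.left_mem ha₁
  obtain rfl := hG.injOn_rank hbd'.left_mem hab.right_mem hb₁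
  obtain rfl := hG.injOn_rank hzb.right_mem hab.right_mem hb₂
  obtain rfl := hG.injOn_rank hzc.right_mem hbc.right_mem hc₂
  exact not_isFullTriple ⟨hab, hbc, hac, ⟨d, fst_lt_of_rank_lt_rank hcd, had⟩,
    ⟨d', fst_lt_of_rank_lt_rank hcd', hbd'⟩, ⟨z, fst_lt_of_rank_lt_rank hza, hzb⟩,
    ⟨z', fst_lt_of_rank_lt_rank hza', hzc⟩⟩

lemma isXMonotonePath_iff {L : List Pt} :
    IsXMonotonePath G L ↔ 2 ≤ L.length ∧ L.IsChain G.Arc := by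
  refine ⟨fun h => ⟨h.1.1, ?_⟩, fun h => ⟨⟨h.1, h.2.imp fun _ _ => Arc.mem_edges⟩,
    h.2.imp fun _ _ => Arc.lt⟩⟩
  have hedges : L.IsChain fun a b => s(a, b) ∈ G.E := h.1.2
  have hlt : L.IsChain fun a b => a.1 < b.1 := h.2
  rw [List.isChain_iff_getElem] at hedges hlt ⊢
  exact fun i hi => ⟨hedges i hi, hlt i hi⟩

lemma mem_V_of_isPathIn {L : List Pt} (h : IsPathIn G L) (hp : p ∈ L) : p ∈ G.V := by
  obtain ⟨q, hpq | hqp⟩ := exists_rel_of_isChain_of_mem h.2 h.1 hp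
  · exact (G.valid.1 p q hpq).1
  · exact (G.valid.1 q p hqp).2.1

theorem DistinctX.finite_and_xMonCount_le (hG : G.DistinctX) {α : ℝ} (hα : 1 < α)
    (hα₃ : α ^ 3 = α ^ 2 + α + 1) :
    {L | IsXMonotonePath G L}.Finite ∧ (xMonCount G : ℝ) ≤ 12 * α ^ G.V.card := by
  have hE (i j : ℕ) : Relation.Map G.Arc G.rank G.rank i j → i < j ∧ j < G.V.card := by
    rintro ⟨a, b, hab, rfl, rfl⟩
    exact ⟨rank_lt_rank hab.left_mem hab.lt, rank_lt_card hab.right_mem⟩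
  obtain ⟨hfin, hcard⟩ := finite_and_ncard_chains_le hα hα₃ hE fun i => hG.not_isFullTriple_rank
  have hmaps : Set.MapsTo (List.map G.rank) {L | IsXMonotonePath G L}
      {L | 2 ≤ L.length ∧ L.IsChain (Relation.Map G.Arc G.rank G.rank)} := fun L hL => by
    obtain ⟨hlen, hchain⟩ := isXMonotonePath_iff.mp hL
    exact ⟨by rwa [List.length_map], List.isChain_map_of_isChain G.rank
      (fun a b hab => ⟨a, b, hab, rfl, rfl⟩) hchain⟩
  have hinj : {L | IsXMonotonePath G L}.InjOn (List.map G.rank) :=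
    fun _ hL _ hL' => injOn_list_map hG.injOn_rank (fun _ => mem_V_of_isPathIn hL.1)
      (fun _ => mem_V_of_isPathIn hL'.1)
  exact ⟨hfin.of_injOn hmaps hinj,
    le_trans (mod_cast Set.ncard_le_ncard_of_injOn _ hmaps hinj hfin) hcard⟩

end PSLG

/-! ### All directions -/

section Shear

/-- The linear automorphism of the plane turning the abscissa into the coordinate along the
direction `(1, t)`. -/
def shear (t : ℝ) : Pt ≃ₗ[ℝ] Pt where
  toFun p := (p.1 + t * p.2, p.2)
  invFun p := (p.1 - t * p.2, p.2)
  map_add' p q := by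
    ext <;> simp only [Prod.fst_add, Prod.snd_add]
    ring
  map_smul' c p := by
    ext <;> simp only [Prod.smul_fst, Prod.smul_snd, smul_eq_mul, RingHom.id_apply]
    ring
  left_inv p := by simp
  right_inv p := by simp

/-- The value of `t` for which the direction `(1, t)` is perpendicular to `ab`; it is only
meaningful when `a.2 ≠ b.2`. -/
def criticalValue (a b : Pt) : ℝ := (b.1 - a.1) / (a.2 - b.2)

variable {a b : Pt} {t t' : ℝ}

@[simp] lemma shear_fst (t : ℝ) (p : Pt) : (shear t p).1 = p.1 + t * p.2 := rfl

lemma dotp_sub_one_mk (a b : Pt) (t : ℝ) :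
    dotp (b - a) (1, t) = (shear t b).1 - (shear t a).1 := by
  simp only [dotp, Prod.fst_sub, Prod.snd_sub, shear_fst]
  ring

lemma criticalValue_comm (a b : Pt) : criticalValue a b = criticalValue b a := by
  rw [criticalValue, criticalValue, ← neg_sub b.1 a.1, ← neg_sub a.2 b.2, neg_div_neg_eq]

lemma eq_criticalValue (hab : a ≠ b) (h : (shear t a).1 = (shear t b).1) :
    t = criticalValue a b := by
  rw [shear_fst, shear_fst] at h
  have hne : a.2 - b.2 ≠ 0 := fun hsub => by
    have hsnd : a.2 = b.2 := sub_eq_zero.mp hsub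
    rw [hsnd] at h
    exact hab (Prod.ext (add_right_cancel h) hsnd)
  rw [criticalValue, eq_div_iff hne]
  linarith

lemma criticalValue_mem_Ioo_or (h : (shear t a).1 < (shear t b).1)
    (h' : (shear t' b).1 < (shear t' a).1) :
    criticalValue a b ∈ Set.Ioo t t' ∨ criticalValue a b ∈ Set.Ioo t' t := by
  simp only [shear_fst] at h h'
  unfold criticalValue
  rcases lt_trichotomy (a.2 - b.2) 0 with hneg | hzero | hpos
  · right
    rw [Set.mem_Ioo, lt_div_iff_of_neg hneg, div_lt_iff_of_neg hneg]
    constructor <;> linarith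
  · rw [sub_eq_zero.mp hzero] at h h'
    linarith
  · left
    rw [Set.mem_Ioo, lt_div_iff₀ hpos, div_lt_iff₀ hpos]
    constructor <;> linarith

end Shear

namespace PSLG

/-- The direction `(1, t)` is generic for `G` if it separates the vertices of `G`. -/
def IsGeneric (G : PSLG) (t : ℝ) : Prop := (G.map (shear t)).DistinctX

open Classical in
/-- The critical values of the edges of `G`, at which the order of the endpoints changes. -/
def criticalValues (G : PSLG) : Finset ℝ :=
  G.E.image (Sym2.lift ⟨criticalValue, criticalValue_comm⟩)

open Classical in
/-- The index of the cell containing `t` in the subdivision of the line by the critical values. -/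
def cell (G : PSLG) (t : ℝ) : ℕ := {s ∈ G.criticalValues | s < t}.card

variable {G : PSLG} {a b : Pt} {s t t' : ℝ} {L : List Pt}

lemma finite_setOf_not_isGeneric (G : PSLG) : {t | ¬ G.IsGeneric t}.Finite := by
  refine (Set.Finite.image2 criticalValue G.V.finite_toSet G.V.finite_toSet).subset fun t ht => ?_
  rw [Set.mem_ofPred_eq, IsGeneric, distinctX_map_iff] at ht
  push Not at ht
  obtain ⟨a, ha, b, hb, heq, hne⟩ := ht
  exact ⟨a, ha, b, hb, (eq_criticalValue hne heq).symm⟩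

theorem card_edges_le (G : PSLG) : G.E.card ≤ 3 * G.V.card := by
  obtain ⟨t, ht⟩ := G.finite_setOf_not_isGeneric.exists_notMem
  simpa using DistinctX.card_edges_le (G := G.map (shear t)) (not_not.mp ht)

lemma criticalValue_mem_criticalValues (h : s(a, b) ∈ G.E) :
    criticalValue a b ∈ G.criticalValues :=
  Finset.mem_image_of_mem _ h

lemma cell_le (G : PSLG) (t : ℝ) : G.cell t ≤ 3 * G.V.card :=
  (Finset.card_filter_le _ _).trans (Finset.card_image_le.trans G.card_edges_le)

lemma cell_lt_cell (hs : s ∈ G.criticalValues) (h : s ∈ Set.Ioo t t') : G.cell t < G.cell t' := by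
  classical
  refine Finset.card_lt_card ((Finset.ssubset_iff_of_subset ?_).mpr
    ⟨s, by simp [hs, h.2], by simp [h.1.le]⟩)
  exact Finset.monotone_filter_right _ fun _ _ hv => hv.trans (h.1.trans h.2)

lemma shear_fst_lt_of_cell_eq (hab : s(a, b) ∈ G.E) (ht' : G.IsGeneric t')
    (hcell : G.cell t = G.cell t') (h : (shear t a).1 < (shear t b).1) :
    (shear t' a).1 < (shear t' b).1 := by
  obtain ⟨ha, hb, hne⟩ := G.valid.1 a b hab
  refine (lt_or_gt_of_ne fun heq =>
    hne (distinctX_map_iff.mp ht' a ha b hb heq)).resolve_right fun hgt => ?_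
  have hmem := criticalValue_mem_criticalValues hab
  rcases criticalValue_mem_Ioo_or h hgt with hs | hs
  · exact (cell_lt_cell hmem hs).ne hcell
  · exact (cell_lt_cell hmem hs).ne' hcell

/-- The paths of `G` that are monotone in a generic direction of the `k`-th cell. -/
def cellPaths (G : PSLG) (k : ℕ) : Set (List Pt) :=
  {L | IsPathIn G L ∧ ∃ t, G.IsGeneric t ∧ G.cell t = k ∧ MonotoneInDir (1, t) L}

lemma isXMonotonePath_map_shear (h : L ∈ G.cellPaths (G.cell t)) (ht : G.IsGeneric t) :
    IsXMonotonePath (G.map (shear t)) (L.map (shear t)) := by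
  obtain ⟨hpath, s, -, hcell, hmono⟩ := h
  have hedges : L.IsChain fun a b => s(a, b) ∈ G.E := hpath.2
  have hlt : L.IsChain fun a b => 0 < dotp (b - a) (1, s) := hmono
  rw [isXMonotonePath_iff, List.length_map, List.isChain_map]
  refine ⟨hpath.1, ?_⟩
  rw [List.isChain_iff_getElem] at hedges hlt ⊢
  intro i hi
  refine arc_map_iff.mpr ⟨hedges i hi, shear_fst_lt_of_cell_eq (hedges i hi) ht hcell ?_⟩
  exact sub_pos.mp (dotp_sub_one_mk _ _ s ▸ hlt i hi)

lemma finite_and_ncard_cellPaths_le (G : PSLG) (k : ℕ) {α : ℝ} (hα : 1 < α)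
    (hα₃ : α ^ 3 = α ^ 2 + α + 1) :
    (G.cellPaths k).Finite ∧ ((G.cellPaths k).ncard : ℝ) ≤ 12 * α ^ G.V.card := by
  rcases (G.cellPaths k).eq_empty_or_nonempty with hempty | ⟨L₀, -, t, ht, rfl, -⟩
  · rw [hempty, Set.ncard_empty, Nat.cast_zero]
    exact ⟨Set.finite_empty, by positivity⟩
  · obtain ⟨hfin, hcard⟩ := DistinctX.finite_and_xMonCount_le ht hα hα₃
    rw [card_V_map] at hcard
    have hmaps : Set.MapsTo (List.map (shear t)) (G.cellPaths (G.cell t))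
        {L | IsXMonotonePath (G.map (shear t)) L} := fun L hL => isXMonotonePath_map_shear hL ht
    have hinj := (List.map_injective_iff.mpr (shear t).injective).injOn
      (s := G.cellPaths (G.cell t))
    exact ⟨hfin.of_injOn hmaps hinj,
      le_trans (mod_cast Set.ncard_le_ncard_of_injOn _ hmaps hinj hfin) hcard⟩

end PSLG

section Directions

variable {G : PSLG} {L : List Pt} {u : Pt}

lemma isOpen_setOf_monotoneInDir (L : List Pt) : IsOpen {u | MonotoneInDir u L} := by
  unfold MonotoneInDir List.Chain'
  induction L with
  | nil => simp
  | cons a L ih =>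
    cases L with
    | nil => simp
    | cons b L =>
      simp only [List.isChain_cons_cons]
      have hdotp : Continuous (dotp (b - a)) := by
        unfold dotp
        fun_prop
      exact (isOpen_lt continuous_const hdotp).inter ih

lemma MonotoneInDir.smul {c : ℝ} (hc : 0 < c) (h : MonotoneInDir u L) :
    MonotoneInDir (c • u) L := by
  refine List.IsChain.imp (fun a b hab => ?_) h
  have hdotp : dotp (b - a) (c • u) = c * dotp (b - a) u := by
    simp only [dotp, Prod.smul_fst, Prod.smul_snd, smul_eq_mul]
    ring
  exact hdotp ▸ mul_pos hc hab

lemma MonotoneInDir.reverse (h : MonotoneInDir u L) : MonotoneInDir (-u) L.reverse := by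
  refine List.isChain_reverse.mpr (List.IsChain.imp (fun a b hab => ?_) h)
  have hdotp : dotp (a - b) (-u) = dotp (b - a) u := by
    simp only [dotp, Prod.fst_sub, Prod.snd_sub, Prod.fst_neg, Prod.snd_neg]
    ring
  exact hdotp ▸ hab

lemma MonotoneInDir.exists_fst_ne_zero (h : MonotoneInDir u L) :
    ∃ v : Pt, v.1 ≠ 0 ∧ MonotoneInDir v L := by
  have hdense : Dense (Prod.fst ⁻¹' {0}ᶜ : Set Pt) :=
    (dense_compl_singleton (0 : ℝ)).preimage isOpenMap_fst
  exact hdense.exists_mem_open (isOpen_setOf_monotoneInDir L) ⟨u, h⟩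

lemma MonotoneInDir.exists_isGeneric (G : PSLG) (h : MonotoneInDir u L) (hu : 0 < u.1) :
    ∃ t, G.IsGeneric t ∧ MonotoneInDir (1, t) L := by
  have hone : u.1⁻¹ • u = (1, u.1⁻¹ * u.2) := Prod.ext (inv_mul_cancel₀ hu.ne') rfl
  have hopen : IsOpen {t : ℝ | MonotoneInDir (1, t) L} :=
    (isOpen_setOf_monotoneInDir L).preimage (Continuous.prodMk_right 1)
  obtain ⟨t, ht, hmono⟩ := (G.finite_setOf_not_isGeneric.countable.dense_compl ℝ).exists_mem_open
    hopen ⟨_, hone ▸ h.smul (inv_pos.mpr hu)⟩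
  exact ⟨t, not_not.mp ht, hmono⟩

lemma IsPathIn.reverse (h : IsPathIn G L) : IsPathIn G L.reverse :=
  ⟨by rw [List.length_reverse]; exact h.1,
    List.isChain_reverse.mpr (List.IsChain.imp (fun _ _ hab => Sym2.eq_swap ▸ hab) h.2)⟩

lemma PSLG.exists_mem_cellPaths_of_fst_pos (hL : IsPathIn G L) (h : MonotoneInDir u L)
    (hu : 0 < u.1) : ∃ k < 3 * G.V.card + 1, L ∈ G.cellPaths k := by
  obtain ⟨t, ht, hmono⟩ := h.exists_isGeneric G hu
  exact ⟨G.cell t, Nat.lt_succ_of_le (G.cell_le t), hL, t, ht, rfl, hmono⟩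

lemma IsMonotonePath.exists_mem_cellPaths (h : IsMonotonePath G L) :
    ∃ k < 3 * G.V.card + 1, L ∈ G.cellPaths k ∨ L.reverse ∈ G.cellPaths k := by
  obtain ⟨hL, u, -, hu⟩ := h
  obtain ⟨v, hv₀, hv⟩ := hu.exists_fst_ne_zero
  rcases hv₀.lt_or_gt with hneg | hpos
  · obtain ⟨k, hk, hmem⟩ := PSLG.exists_mem_cellPaths_of_fst_pos hL.reverse hv.reverse
      (neg_pos.mpr hneg)
    exact ⟨k, hk, Or.inr hmem⟩
  · obtain ⟨k, hk, hmem⟩ := PSLG.exists_mem_cellPaths_of_fst_pos hL hv hpos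
    exact ⟨k, hk, Or.inl hmem⟩

lemma monPathCount_le_sum_ncard_cellPaths (hfin : ∀ k, (G.cellPaths k).Finite) :
    monPathCount G ≤ ∑ k ∈ Finset.range (3 * G.V.card + 1), (G.cellPaths k).ncard := by
  have hcover : {P : Set (List Pt) | ∃ L, IsMonotonePath G L ∧ P = {L, L.reverse}} ⊆
      ⋃ k ∈ Finset.range (3 * G.V.card + 1), (fun L => {L, L.reverse}) '' G.cellPaths k := by
    rintro _ ⟨L, hL, rfl⟩
    obtain ⟨k, hk, hmem⟩ := hL.exists_mem_cellPaths
    refine Set.mem_biUnion (Finset.mem_range.mpr hk) ?_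
    rcases hmem with hmem | hmem
    · exact ⟨L, hmem, rfl⟩
    · exact ⟨L.reverse, hmem, by simp only [List.reverse_reverse, Set.pair_comm]⟩
  calc monPathCount G
      ≤ (⋃ k ∈ Finset.range (3 * G.V.card + 1),
          (fun L => ({L, L.reverse} : Set (List Pt))) '' G.cellPaths k).ncard :=
        Set.ncard_le_ncard hcover ((Finset.finite_toSet _).biUnion fun k _ => (hfin k).image _)
    _ ≤ ∑ k ∈ Finset.range (3 * G.V.card + 1), (G.cellPaths k).ncard :=
        (Finset.set_ncard_biUnion_le _ _).trans
          (Finset.sum_le_sum fun k _ => Set.ncard_image_le (hfin k))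

lemma monPathCount_eq_zero (hV : G.V = ∅) : monPathCount G = 0 := by
  refine (congrArg Set.ncard (Set.eq_empty_iff_forall_notMem.mpr ?_)).trans (Set.ncard_empty _)
  rintro _ ⟨L, ⟨hL, -⟩, -⟩
  have hmem := PSLG.mem_V_of_isPathIn hL (List.getElem_mem (zero_lt_two.trans_le hL.1))
  simp [hV] at hmem

end Directions

/-- every PSLG on `n` points has at most `C·n·αⁿ` monotone paths
(a path and its reversal counted once). -/
theorem monotone_upper_bound :
    ∃ C : ℝ, 0 < C ∧ ∀ α : ℝ, 1 < α → α ^ 3 = α ^ 2 + α + 1 →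
      ∀ (n : ℕ) (G : PSLG), G.V.card = n →
        (monPathCount G : ℝ) ≤ C * n * α ^ n := by
  refine ⟨48, by norm_num, fun α hα hα₃ n G hn => ?_⟩
  rcases G.V.eq_empty_or_nonempty with hV | hV
  · rw [monPathCount_eq_zero hV, Nat.cast_zero]
    positivity
  have hcells (k : ℕ) := hn ▸ G.finite_and_ncard_cellPaths_le k hα hα₃
  have hn₁ : (1 : ℝ) ≤ n := mod_cast hn ▸ hV.card_pos
  calc (monPathCount G : ℝ)
      ≤ ∑ k ∈ Finset.range (3 * n + 1), ((G.cellPaths k).ncard : ℝ) :=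
        mod_cast hn ▸ monPathCount_le_sum_ncard_cellPaths fun k => (hcells k).1
    _ ≤ ∑ _k ∈ Finset.range (3 * n + 1), 12 * α ^ n := Finset.sum_le_sum fun k _ => (hcells k).2
    _ = (3 * n + 1) * (12 * α ^ n) := by simp
    _ ≤ 4 * n * (12 * α ^ n) := by
        gcongr
        linarith
    _ = 48 * n * α ^ n := by ring

end
end
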